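/- arXiv:0708.3424 — 2 statements merged into one kernel-verified Lean document; each statement's English description precedes it below -/
import Mathlib

section
/- Let f : X ⟶ Y be a finite surjective morphism of schemes, where Y is a noetherian scheme. If X is an affine scheme, then Y is an affine scheme. -/
open AlgebraicGeometry

namespace Chevalley

universe u

open CategoryTheory TopologicalSpace

/-- Restriction of sections of a scheme along an inclusion of opens. -/
noncomputable def res {Y : Scheme.{u}} {U V : Y.Opens} (h : U ≤ V) : Γ(Y, V) →+* Γ(Y, U) :=
  (Y.presheaf.map (homOfLE h).op).hom

section Res

variable {X Y : Scheme.{u}} {U V W : Y.Opens}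

lemma res_res (h : U ≤ V) (h' : V ≤ W) (x : Γ(Y, W)) :
    res h (res h' x) = res (h.trans h') x := by
  simp only [res, ← CommRingCat.comp_apply, ← Functor.map_comp]
  rfl

lemma app_res (f : X ⟶ Y) (h : U ≤ V) (x : Γ(Y, V)) :
    f.app U (res h x) = res (f.preimage_mono h) (f.app V x) := by
  simp only [res, ← CommRingCat.comp_apply]
  rw [f.naturality]
  rfl

lemma basicOpen_res (h : U ≤ V) (x : Γ(Y, V)) :
    Y.basicOpen (res h x) = U ⊓ Y.basicOpen x :=
  Y.basicOpen_res _ _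

lemma res_injective_of_cover {κ : Type*} (U : κ → Y.Opens) (hU : ∀ i, U i ≤ V)
    (hV : V ≤ ⨆ i, U i) {x y : Γ(Y, V)} (h : ∀ i, res (hU i) x = res (hU i) y) : x = y :=
  Y.sheaf.eq_of_locally_eq' U V (fun i ↦ homOfLE (hU i)) hV x y h

lemma exists_glue {κ : Type*} (U : κ → Y.Opens) (hU : ∀ i, U i ≤ V)
    (hV : V ≤ ⨆ i, U i) (x : ∀ i, Γ(Y, U i))
    (h : ∀ i j, res (inf_le_left : U i ⊓ U j ≤ U i) (x i) =
      res (inf_le_right : U i ⊓ U j ≤ U j) (x j)) :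
    ∃ y : Γ(Y, V), ∀ i, res (hU i) y = x i := by
  obtain ⟨y, hy, -⟩ := Y.sheaf.existsUnique_gluing' U V (fun i ↦ homOfLE (hU i)) hV x
    (fun i j ↦ h i j)
  exact ⟨y, hy⟩

lemma exists_finite_affine_cover (Y : Scheme.{u}) [CompactSpace Y] :
    ∃ s : Finset Y.affineOpens, ⨆ i : s, (i.1 : Y.Opens) = ⊤ := by
  obtain ⟨t, ht⟩ := CompleteLattice.IsCompactElement.exists_finset_of_le_iSup (Y.Opens)
    ((Opens.isCompactElement_iff _).mpr isCompact_univ)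
    (fun i : Y.affineOpens ↦ (i : Y.Opens)) (iSup_affineOpens_eq_top Y).ge
  refine ⟨t, top_le_iff.mp (ht.trans ?_)⟩
  rw [iSup_subtype']

lemma exists_pow_mul_eq_zero (hU : IsCompact (U : Set Y)) {x f : Γ(Y, U)}
    (h : res (Y.basicOpen_le f) x = 0) : ∃ n : ℕ, f ^ n * x = 0 :=
  exists_pow_mul_eq_zero_of_res_basicOpen_eq_zero_of_isCompact Y hU x f h

lemma exists_res_eq_pow_mul (hU : IsAffineOpen U) (f : Γ(Y, U)) (x : Γ(Y, Y.basicOpen f)) :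
    ∃ (n : ℕ) (y : Γ(Y, U)),
      res (Y.basicOpen_le f) y = res (Y.basicOpen_le f) f ^ n * x :=
  exists_eq_pow_mul_of_isAffineOpen Y U hU f x

lemma span_eq_top_of_forall_mem_basicOpen [IsAffine Y] (S : Set Γ(Y, ⊤))
    (h : ∀ y : Y, ∃ r ∈ S, y ∈ Y.basicOpen r) : Ideal.span S = ⊤ := by
  rw [← IsAffineOpen.iSup_basicOpen_eq_self_iff (isAffineOpen_top Y), eq_top_iff]
  intro y _
  obtain ⟨r, hr, hy⟩ := h y
  exact Opens.mem_iSup.mpr ⟨⟨r, hr⟩, hy⟩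

lemma exists_basicOpen_le_of_isAffine [IsAffine Y] (U : Y.Opens) (y : Y) (hy : y ∈ U) :
    ∃ r : Γ(Y, ⊤), y ∈ Y.basicOpen r ∧ Y.basicOpen r ≤ U := by
  obtain ⟨_, ⟨_, ⟨r, rfl⟩, rfl⟩, hyr, hr⟩ :=
    (isBasis_basicOpen Y).exists_subset_of_mem_open hy U.2
  exact ⟨r, hyr, hr⟩

lemma isAffineOpen_basicOpen_of_le (hU : IsAffineOpen U) (a : Γ(Y, ⊤)) (h : Y.basicOpen a ≤ U) :
    IsAffineOpen (Y.basicOpen a) := by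
  have := hU.basicOpen (res le_top a)
  rwa [basicOpen_res, inf_eq_right.mpr h] at this

lemma mem_basicOpen_app (f : X ⟶ Y) (a : Γ(Y, U)) (x : X) :
    x ∈ X.basicOpen (f.app U a) ↔ f x ∈ Y.basicOpen a := by
  rw [← Scheme.preimage_basicOpen]
  rfl

lemma app_surjective_of_isClosedImmersion (f : X ⟶ Y) [IsClosedImmersion f]
    (hU : IsAffineOpen U) : Function.Surjective (f.app U) :=
  (isClosedImmersion_iff_isAffineHom.mp ‹_›).2 U hU

end Res

section SquareZero

variable {Z Y : Scheme.{u}} (ι : Z ⟶ Y) [IsClosedImmersion ι] [IsAffine Z] [IsNoetherian Y]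

/-- If a closed immersion with affine source is surjective and is locally defined by a square-zero
ideal, then global sections lift along it. -/
lemma appTop_surjective_of_sq_zero (hι : Function.Surjective ι)
    (hsq : ∀ (U : Y.Opens) (x y : Γ(Y, U)), ι.app U x = 0 → ι.app U y = 0 → x * y = 0) :
    Function.Surjective ι.appTop := by
  intro s
  obtain ⟨κ, hκ⟩ := exists_finite_affine_cover Y
  let U : κ → Y.Opens := fun i ↦ i.1
  have hU (i : κ) : IsAffineOpen (U i) := i.1.2
  have lift (i : κ) (r : Γ(Z, ⊤)) : ∃ x : Γ(Y, U i), ι.app (U i) x = res le_top r :=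
    app_surjective_of_isClosedImmersion ι (hU i) _
  choose x hx using fun i ↦ lift i s
  let l (i j : κ) : Γ(Y, U i) →+* Γ(Y, U i ⊓ U j) := res inf_le_left
  let ρ (i j : κ) : Γ(Y, U j) →+* Γ(Y, U i ⊓ U j) := res inf_le_right
  let c (i j : κ) : Γ(Y, U i ⊓ U j) := l i j (x i) - ρ i j (x j)
  have hl (i j : κ) (r : Γ(Z, ⊤)) (y : Γ(Y, U i)) (hy : ι.app (U i) y = res le_top r) :
      ι.app (U i ⊓ U j) (l i j y) = res le_top r := by
    simp only [l, app_res, hy, res_res]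
  have hρ (i j : κ) (r : Γ(Z, ⊤)) (y : Γ(Y, U j)) (hy : ι.app (U j) y = res le_top r) :
      ι.app (U i ⊓ U j) (ρ i j y) = res le_top r := by
    simp only [ρ, app_res, hy, res_res]
  have hc (i j : κ) : ι.app _ (c i j) = 0 := by
    simp only [c, map_sub, hl i j s _ (hx i), hρ i j s _ (hx j), sub_self]
  let 𝔞 : Ideal Γ(Z, ⊤) :=
    { carrier := {r | ∃ t h : ∀ i, Γ(Y, U i), (∀ i, ι.app (U i) (t i) = res le_top r) ∧
        (∀ i, ι.app (U i) (h i) = 0) ∧ ∀ i j, l i j (h i) - ρ i j (h j) = l i j (t i) * c i j}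
      zero_mem' := ⟨0, 0, by simp, by simp, by simp⟩
      add_mem' := by
        rintro a b ⟨t, h, h₁, h₂, h₃⟩ ⟨t', h', h₁', h₂', h₃'⟩
        refine ⟨t + t', h + h', by simp [h₁, h₁'], by simp [h₂, h₂'], fun i j ↦ ?_⟩
        simp only [Pi.add_apply, map_add]
        linear_combination h₃ i j + h₃' i j
      smul_mem' := by
        rintro a b ⟨t, h, h₁, h₂, h₃⟩
        choose a' ha' using fun i ↦ lift i a
        refine ⟨a' * t, a' * h, by simp [h₁, ha'], by simp [h₂], fun i j ↦ ?_⟩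
        have := hsq _ (l i j (a' i) - ρ i j (a' j)) (ρ i j (h j))
          (by rw [map_sub, hl i j a _ (ha' i), hρ i j a _ (ha' j), sub_self])
          (by simp only [ρ, app_res, h₂, map_zero])
        simp only [Pi.mul_apply, map_mul]
        linear_combination l i j (a' i) * h₃ i j + this }
  have key (r : Γ(Z, ⊤)) (k : κ) (hr : Z.basicOpen r ≤ ι ⁻¹ᵁ U k) : r ∈ 𝔞.radical := by
    choose t ht using fun i ↦ lift i r
    have hbo (i : κ) (z : Z) (hz : ι z ∈ U i) :
        ι z ∈ Y.basicOpen (t i) ↔ z ∈ Z.basicOpen r := by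
      rw [← mem_basicOpen_app, ht, basicOpen_res]
      exact ⟨fun h ↦ h.2, fun h ↦ ⟨hz, h⟩⟩
    have htk (i : κ) : Y.basicOpen (t i) ≤ U i ⊓ U k := by
      intro y hy
      obtain ⟨z, rfl⟩ := hι y
      have hz := Y.basicOpen_le _ hy
      exact ⟨hz, hr ((hbo i z hz).mp hy)⟩
    have h₁ (i : κ) : ∃ n : ℕ, ∃ y : Γ(Y, U i), ι.app (U i) y = 0 ∧
        res (Y.basicOpen_le _) y = res (Y.basicOpen_le _) (t i) ^ n * res (htk i) (c i k) := by
      obtain ⟨n, y, hy⟩ := exists_res_eq_pow_mul (hU i) (t i) (res (htk i) (c i k))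
      obtain ⟨m, hm⟩ := exists_pow_mul_eq_zero (U := ι ⁻¹ᵁ U i) (x := ι.app (U i) y)
        (f := ι.app (U i) (t i)) ((hU i).preimage ι).isCompact (by
          have := app_res ι (Y.basicOpen_le (t i)) y
          rw [hy, map_mul, app_res, hc, map_zero, mul_zero] at this
          have := congr(res (Scheme.preimage_basicOpen ι (t i)).ge $this)
          rwa [map_zero, res_res, eq_comm] at this)
      refine ⟨m + n, t i ^ m * y, by rw [map_mul, map_pow, hm], ?_⟩
      rw [map_mul, map_pow, hy, pow_add, mul_assoc]
    have h₂ : ∃ n : ℕ, ∀ i, ∃ y : Γ(Y, U i), ι.app (U i) y = 0 ∧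
        res (Y.basicOpen_le _) y = res (Y.basicOpen_le _) (t i) ^ n * res (htk i) (c i k) := by
      choose n y hy hy' using h₁
      refine ⟨∑ i, n i, fun i ↦ ⟨t i ^ (∑ i, n i - n i) * y i, by rw [map_mul, hy, mul_zero], ?_⟩⟩
      rw [map_mul, map_pow, hy', ← mul_assoc, ← pow_add, Nat.sub_add_cancel]
      exact Finset.single_le_sum (fun _ _ ↦ Nat.zero_le _) (Finset.mem_univ i)
    obtain ⟨n, hn⟩ := h₂
    choose g hg hg' using hn
    have h₃ : ∃ m : ℕ, ∀ i j, l i j (t i) ^ m *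
        (l i j (g i) - ρ i j (g j) - l i j (t i) ^ n * c i j) = 0 := by
      have h₄ (i j : κ) : ∃ m : ℕ, l i j (t i) ^ m *
          (l i j (g i) - ρ i j (g j) - l i j (t i) ^ n * c i j) = 0 := by
        refine exists_pow_mul_eq_zero (NoetherianSpace.isCompact _) ?_
        have hD : Y.basicOpen (l i j (t i)) = U i ⊓ U j ⊓ Y.basicOpen (t i) := basicOpen_res _ _
        have hi : Y.basicOpen (l i j (t i)) ≤ Y.basicOpen (t i) := hD.trans_le inf_le_right
        have hj : Y.basicOpen (l i j (t i)) ≤ Y.basicOpen (t j) := by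
          intro y hy
          rw [hD] at hy
          obtain ⟨z, rfl⟩ := hι y
          exact (hbo j z hy.1.2).mpr ((hbo i z hy.1.1).mp hy.2)
        have ei := congr(res hi $(hg' i))
        have ej := congr(res hj $(hg' j))
        have hDi : Y.basicOpen (l i j (t i)) ≤ U i := hi.trans (Y.basicOpen_le _)
        have hDj : Y.basicOpen (l i j (t i)) ≤ U j := hj.trans (Y.basicOpen_le _)
        have et := hsq _ (res hDi (t i) ^ n - res hDj (t j) ^ n)
          (res (hj.trans (htk j)) (c j k))
          (by simp only [map_sub, map_pow, app_res, ht, res_res, sub_self])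
          (by rw [app_res, hc, map_zero])
        simp only [l, ρ, c, map_sub, map_mul, map_pow, res_res] at ei ej et ⊢
        linear_combination ei - ej + et
      choose m hm using h₄
      refine ⟨∑ i, ∑ j, m i j, fun i j ↦ ?_⟩
      have : m i j ≤ ∑ i, ∑ j, m i j :=
        (Finset.single_le_sum (f := m i) (fun _ _ ↦ Nat.zero_le _) (Finset.mem_univ j)).trans
          (Finset.single_le_sum (f := fun i ↦ ∑ j, m i j) (fun _ _ ↦ Nat.zero_le _)
            (Finset.mem_univ i))
      rw [← Nat.sub_add_cancel this, pow_add, mul_assoc, hm, mul_zero]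
    obtain ⟨m, hm⟩ := h₃
    refine ⟨n + m, fun i ↦ t i ^ (n + m), fun i ↦ t i ^ m * g i, by simp [ht],
      by simp [hg], fun i j ↦ ?_⟩
    have := hsq _ (l i j (t i) ^ m - ρ i j (t j) ^ m) (ρ i j (g j))
      (by rw [map_sub, map_pow, map_pow, hl i j r _ (ht i), hρ i j r _ (ht j), sub_self])
      (by simp only [ρ, app_res, hg, map_zero])
    simp only [map_mul, map_pow]
    linear_combination hm i j + this
  have h𝔞 : 𝔞 = ⊤ := by
    rw [← Ideal.radical_eq_top, eq_top_iff, ← span_eq_top_of_forall_mem_basicOpen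
      {r : Γ(Z, ⊤) | ∃ k, Z.basicOpen r ≤ ι ⁻¹ᵁ U k}, Ideal.span_le]
    · rintro r ⟨k, hk⟩
      exact key r k hk
    · intro z
      obtain ⟨k, hk⟩ := Opens.mem_iSup.mp (hκ.ge (Opens.mem_top (ι z)))
      obtain ⟨r, hr, hr'⟩ := exists_basicOpen_le_of_isAffine (ι ⁻¹ᵁ U k) z hk
      exact ⟨r, ⟨k, hr'⟩, hr⟩
  obtain ⟨t, h, h₁, h₂, h₃⟩ := 𝔞.eq_top_iff_one.mp h𝔞
  obtain ⟨y, hy⟩ := exists_glue (V := ⊤) U (fun _ ↦ le_top) hκ.ge (fun i ↦ x i - h i) fun i j ↦ by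
    have := hsq _ (l i j (t i) - 1) (c i j)
      (by rw [map_sub, hl i j 1 _ (h₁ i), map_one, map_one, sub_self]) (hc i j)
    change l i j (x i - h i) = ρ i j (x j - h j)
    simp only [map_sub]
    linear_combination -this - h₃ i j
  refine ⟨y, ?_⟩
  refine res_injective_of_cover (V := ⊤) (fun i ↦ ι ⁻¹ᵁ U i) (fun _ ↦ le_top) ?_ fun i ↦ ?_
  · intro z _
    obtain ⟨k, hk⟩ := Opens.mem_iSup.mp (hκ.ge (Opens.mem_top (ι z)))
    exact Opens.mem_iSup.mpr ⟨k, hk⟩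
  · have := app_res ι (le_top : U i ≤ ⊤) y
    rw [hy, map_sub, hx, h₂, sub_zero] at this
    exact this.symm

end SquareZero

section Criterion

variable {Y Z : Scheme.{u}}

/-- The ideal generated by the global sections with affine nonvanishing locus. -/
noncomputable def affineIdeal (Y : Scheme.{u}) : Ideal Γ(Y, ⊤) :=
  Ideal.span {a | IsAffineOpen (Y.basicOpen a)}

lemma isAffine_of_affineIdeal_eq_top (h : affineIdeal Y = ⊤) : IsAffine Y :=
  isAffine_of_isAffineOpen_basicOpen _ h fun _ ↦ id

/-- Every point has a neighbourhood which is the affine nonvanishing locus of a global section. -/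
def HasAffineBasicOpens (Y : Scheme.{u}) : Prop :=
  ∀ y : Y, ∃ a : Γ(Y, ⊤), IsAffineOpen (Y.basicOpen a) ∧ y ∈ Y.basicOpen a

lemma exists_mem_affineIdeal_appTop_eq_one (ι : Z ⟶ Y) [IsAffine Z]
    (hι : Function.Surjective ι.appTop) (hY : HasAffineBasicOpens Y) :
    ∃ u ∈ affineIdeal Y, ι.appTop u = 1 := by
  suffices h : (affineIdeal Y).map ι.appTop.hom = ⊤ from
    (Ideal.mem_map_iff_of_surjective _ hι).mp (h ▸ Submodule.mem_top)
  rw [affineIdeal, Ideal.map_span]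
  refine span_eq_top_of_forall_mem_basicOpen _ fun z ↦ ?_
  obtain ⟨a, ha, hza⟩ := hY (ι z)
  exact ⟨_, ⟨a, ha, rfl⟩, (mem_basicOpen_app ι a z).mpr hza⟩

lemma exists_basicOpen_preimage_le (ι : Z ⟶ Y) [IsAffine Z]
    (hι : Function.Surjective ι.appTop) (z : Z) (W : Z.Opens) (hz : z ∈ W) :
    ∃ a : Γ(Y, ⊤), ι z ∈ Y.basicOpen a ∧ ∀ z', ι z' ∈ Y.basicOpen a → z' ∈ W := by
  obtain ⟨r, hr, hr'⟩ := exists_basicOpen_le_of_isAffine W z hz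
  obtain ⟨a, rfl⟩ := hι r
  exact ⟨a, (mem_basicOpen_app ι a z).mp hr, fun z' h ↦ hr' ((mem_basicOpen_app ι a z').mpr h)⟩

lemma exists_isAffineOpen_mem (y : Y) : ∃ U : Y.Opens, IsAffineOpen U ∧ y ∈ U := by
  obtain ⟨U, hU⟩ := Opens.mem_iSup.mp ((iSup_affineOpens_eq_top Y).ge (Opens.mem_top y))
  exact ⟨U, U.2, hU⟩

end Criterion

section IdealSheaf

variable {Y : Scheme.{u}}

lemma app_subschemeι_eq_zero_iff (I : Y.IdealSheafData) (U : Y.affineOpens) (x : Γ(Y, U)) :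
    I.subschemeι.app U x = 0 ↔ x ∈ I.ideal U := by
  rw [← I.ker_subschemeι_app U]
  rfl

/-- Sections over an arbitrary open agree if they agree on all smaller affine opens. -/
lemma eq_of_res_affine {U : Y.Opens} {x y : Γ(Y, U)}
    (h : ∀ (V : Y.affineOpens) (hV : V.1 ≤ U), res hV x = res hV y) : x = y := by
  refine res_injective_of_cover (fun V : {V : Y.affineOpens // V.1 ≤ U} ↦ V.1.1)
    (fun V ↦ V.2) ?_ fun V ↦ h V.1 V.2
  intro y hy
  obtain ⟨V, hV, hyV, hVU⟩ := (Y.isBasis_affineOpens).exists_subset_of_mem_open hy U.2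
  obtain ⟨V, hV, rfl⟩ := hV
  exact Opens.mem_iSup.mpr ⟨⟨⟨V, hV⟩, hVU⟩, hyV⟩

lemma isAffine_of_sq_zero {Z : Scheme.{u}} (ι : Z ⟶ Y) [IsClosedImmersion ι] [IsAffine Z]
    [IsNoetherian Y] (hι : Function.Surjective ι)
    (hsq : ∀ (U : Y.Opens) (x y : Γ(Y, U)), ι.app U x = 0 → ι.app U y = 0 → x * y = 0) :
    IsAffine Y := by
  have hs := appTop_surjective_of_sq_zero ι hι hsq
  obtain ⟨u, hu, hu'⟩ := exists_mem_affineIdeal_appTop_eq_one ι hs fun y ↦ by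
    obtain ⟨z, rfl⟩ := hι y
    obtain ⟨U, hU, hz⟩ := exists_isAffineOpen_mem (ι z)
    obtain ⟨a, ha, ha'⟩ := exists_basicOpen_preimage_le ι hs z (ι ⁻¹ᵁ U) hz
    refine ⟨a, isAffineOpen_basicOpen_of_le hU a fun y hy ↦ ?_, ha⟩
    obtain ⟨z', rfl⟩ := hι y
    exact ha' z' hy
  refine isAffine_of_affineIdeal_eq_top ((Ideal.eq_top_iff_one _).mpr ?_)
  have h : (1 - u) * (1 - u) = 0 := hsq ⊤ _ _
    (by rw [map_sub, map_one]; exact sub_eq_zero.mpr hu'.symm)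
    (by rw [map_sub, map_one]; exact sub_eq_zero.mpr hu'.symm)
  rw [show (1 : Γ(Y, ⊤)) = (2 - u) * u by linear_combination h]
  exact Ideal.mul_mem_left _ _ hu

lemma exists_nilradical_pow_eq_bot (Y : Scheme.{u}) [IsNoetherian Y] :
    ∃ n : ℕ, Y.nilradical ^ n = ⊥ := by
  obtain ⟨κ, hκ⟩ := exists_finite_affine_cover Y
  have h (i : κ) : ∃ n : ℕ, Y.nilradical.ideal i.1 ^ n = ⊥ := by
    have := IsLocallyNoetherian.component_noetherian i.1
    exact IsNoetherianRing.isNilpotent_nilradical Γ(Y, i.1)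
  choose n hn using h
  refine ⟨∑ i, n i, Scheme.IdealSheafData.ext_of_iSup_eq_top (fun i : κ ↦ i.1) hκ fun i ↦ ?_⟩
  rw [Scheme.IdealSheafData.ideal_pow, Pi.pow_apply, Scheme.IdealSheafData.ideal_bot,
    Pi.bot_apply, ← le_bot_iff, ← hn i]
  exact Ideal.pow_le_pow_right (Finset.single_le_sum (fun _ _ ↦ Nat.zero_le _) (Finset.mem_univ i))

lemma isReduced_of_nilradical_eq_bot (h : Y.nilradical = ⊥) : IsReduced Y := by
  have (U : Y.affineOpens) : _root_.IsReduced Γ(Y, U) := by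
    rw [← nilradical_eq_bot_iff]
    exact congr(($h).ideal U)
  refine ⟨fun U ↦ ⟨fun x hx ↦ eq_of_res_affine fun V hV ↦ ?_⟩⟩
  rw [map_zero]
  exact (hx.map (res hV)).eq_zero

/-- The non-reduced step of the noetherian induction. -/
lemma isAffine_of_not_isReduced [IsNoetherian Y] (hY : ¬ IsReduced Y)
    (ih : ∀ K : Y.IdealSheafData, K ≠ ⊥ → IsAffine K.subscheme) : IsAffine Y := by
  classical
  have hn := exists_nilradical_pow_eq_bot Y
  have hN : Y.nilradical ≠ ⊥ := fun h ↦ hY (isReduced_of_nilradical_eq_bot h)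
  obtain ⟨k, hk⟩ : ∃ k, Nat.find hn = k + 2 := by
    have hs := Nat.find_spec hn
    rcases h : Nat.find hn with _ | _ | k
    · rw [h, pow_zero] at hs
      exact (hN (le_bot_iff.mp (le_top.trans hs.le))).elim
    · rw [h, zero_add, pow_one] at hs
      exact (hN hs).elim
    · exact ⟨k, rfl⟩
  let J := Y.nilradical ^ (k + 1)
  have hJ : J ≠ ⊥ := Nat.find_min hn (by omega)
  have hJ2 : J * J = ⊥ := by
    have hs := Nat.find_spec hn
    rw [hk] at hs
    rw [← pow_add, show k + 1 + (k + 1) = k + 2 + k by ring, pow_add, hs]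
    ext; simp
  have := ih J hJ
  refine isAffine_of_sq_zero J.subschemeι ?_ fun U x y hx hy ↦ eq_of_res_affine fun V hV ↦ ?_
  · rw [← Set.range_eq_univ, Scheme.IdealSheafData.range_subschemeι]
    simp [J]
  · rw [map_mul, map_zero, ← Ideal.mem_bot,
      show (⊥ : Ideal Γ(Y, V)) = J.ideal V * J.ideal V from congr(($hJ2).ideal V).symm]
    refine Ideal.mul_mem_mul ?_ ?_ <;>
    rw [← app_subschemeι_eq_zero_iff, app_res]
    · rw [hx, map_zero]
    · rw [hy, map_zero]

end IdealSheaf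

section Union

variable {Y : Scheme.{u}}

lemma app_comp_eq_res {Z Z' : Scheme.{u}} {g : Z' ⟶ Z} {h : Z ⟶ Y} {k : Z' ⟶ Y} (e : g ≫ h = k)
    {U : Y.Opens} {x : Γ(Y, U)} {a : Γ(Z, ⊤)} (hx : h.app U x = res le_top a) :
    k.app U x = res le_top (g.appTop a) := by
  subst e
  have h₁ : (g ≫ h).app U x = g.app (h ⁻¹ᵁ U) (h.app U x) := by rw [Scheme.Hom.comp_app]; rfl
  rw [h₁, hx]
  exact app_res g le_top a

lemma mem_basicOpen_appTop {Z : Scheme.{u}} (f : Z ⟶ Y) (a : Γ(Y, ⊤)) (z : Z) :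
    z ∈ Z.basicOpen (f.appTop a) ↔ f z ∈ Y.basicOpen a :=
  mem_basicOpen_app f a z

lemma appTop_eq_of_forall_app {Z : Scheme.{u}} (f : Z ⟶ Y) (y : Γ(Y, ⊤)) (a : Γ(Z, ⊤))
    {κ : Type*} (U : κ → Y.Opens) (hU : ⨆ i, U i = ⊤)
    (h : ∀ i, f.app (U i) (res le_top y) = res le_top a) : f.appTop y = a := by
  refine res_injective_of_cover (V := ⊤) (fun i ↦ f ⁻¹ᵁ U i) (fun _ ↦ le_top) ?_ fun i ↦ ?_
  · intro z _
    obtain ⟨k, hk⟩ := Opens.mem_iSup.mp (hU.ge (Opens.mem_top (f z)))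
    exact Opens.mem_iSup.mpr ⟨k, hk⟩
  · exact (app_res f (le_top : U i ≤ ⊤) y).symm.trans (h i)

variable {I J : Y.IdealSheafData}

lemma mem_support_or_mem_support (hIJ : I ⊓ J = ⊥) (y : Y) : y ∈ I.support ∨ y ∈ J.support := by
  have h : I * J = ⊥ := le_bot_iff.mp (hIJ ▸ fun _ ↦ Ideal.mul_le_inf)
  have h' : y ∈ (I * J).support := by
    rw [h]
    trivial
  exact h'

lemma eq_of_app_subschemeι_eq (hIJ : I ⊓ J = ⊥) {U : Y.Opens} {x y : Γ(Y, U)}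
    (hI : I.subschemeι.app U x = I.subschemeι.app U y)
    (hJ : J.subschemeι.app U x = J.subschemeι.app U y) : x = y := by
  refine eq_of_res_affine fun V hV ↦ sub_eq_zero.mp ?_
  rw [← Ideal.mem_bot, show (⊥ : Ideal Γ(Y, V)) = I.ideal V ⊓ J.ideal V from
    congr(($hIJ).ideal V).symm]
  constructor <;> refine (app_subschemeι_eq_zero_iff _ V _).mp ?_
  · rw [map_sub, app_res, app_res, hI, sub_self]
  · rw [map_sub, app_res, app_res, hJ, sub_self]

lemma exists_appTop_subschemeι_eq (hIJ : I ⊓ J = ⊥) (a : Γ(I.subscheme, ⊤))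
    (b : Γ(J.subscheme, ⊤))
    (hab : (Scheme.IdealSheafData.inclusion (le_sup_left : I ≤ I ⊔ J)).appTop a =
      (Scheme.IdealSheafData.inclusion (le_sup_right : J ≤ I ⊔ J)).appTop b) :
    ∃ c : Γ(Y, ⊤), I.subschemeι.appTop c = a ∧ J.subschemeι.appTop c = b := by
  have h (U : Y.affineOpens) : ∃ c : Γ(Y, U), I.subschemeι.app U c = res le_top a ∧
      J.subschemeι.app U c = res le_top b := by
    obtain ⟨x, hx⟩ := app_surjective_of_isClosedImmersion I.subschemeι U.2 (res le_top a)
    obtain ⟨y, hy⟩ := app_surjective_of_isClosedImmersion J.subschemeι U.2 (res le_top b)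
    have hxy : x - y ∈ (I ⊔ J).ideal U := by
      rw [← app_subschemeι_eq_zero_iff, map_sub,
        app_comp_eq_res (Scheme.IdealSheafData.inclusion_subschemeι le_sup_left) hx,
        app_comp_eq_res (Scheme.IdealSheafData.inclusion_subschemeι le_sup_right) hy, hab,
        sub_self]
    obtain ⟨i, hi, j, hj, e⟩ := Submodule.mem_sup.mp hxy
    refine ⟨x - i, ?_, ?_⟩
    · rw [map_sub, hx, (app_subschemeι_eq_zero_iff I U i).mpr hi, sub_zero]
    · rw [show x - i = y + j by linear_combination -e, map_add, hy,
        (app_subschemeι_eq_zero_iff J U j).mpr hj, add_zero]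
  choose c hc hc' using h
  obtain ⟨y, hy⟩ := exists_glue (V := ⊤) (fun U : Y.affineOpens ↦ U.1) (fun _ ↦ le_top)
    (iSup_affineOpens_eq_top Y).ge c fun U V ↦ by
      refine eq_of_app_subschemeι_eq hIJ ?_ ?_
      · simp only [app_res, hc, res_res]
      · simp only [app_res, hc', res_res]
  exact ⟨y, appTop_eq_of_forall_app _ _ _ _ (iSup_affineOpens_eq_top Y) fun U ↦ by rw [hy, hc],
    appTop_eq_of_forall_app _ _ _ _ (iSup_affineOpens_eq_top Y) fun U ↦ by rw [hy, hc']⟩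

instance isClosedImmersion_inclusion (h : I ≤ J) :
    IsClosedImmersion (Scheme.IdealSheafData.inclusion h) := by
  have : IsClosedImmersion (Scheme.IdealSheafData.inclusion h ≫ I.subschemeι) := by
    rw [Scheme.IdealSheafData.inclusion_subschemeι]; infer_instance
  exact IsClosedImmersion.of_comp _ I.subschemeι

lemma appTop_surjective_of_isAffine {Z W : Scheme.{u}} [IsAffine W] (f : Z ⟶ W)
    [IsClosedImmersion f] : Function.Surjective f.appTop :=
  (IsClosedImmersion.isAffine_surjective_of_isAffine f).2

lemma appTop_subschemeι_surjective_of_inf_eq_bot (hIJ : I ⊓ J = ⊥) [IsAffine J.subscheme] :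
    Function.Surjective I.subschemeι.appTop := by
  intro a
  obtain ⟨b, hb⟩ := appTop_surjective_of_isAffine
    (Scheme.IdealSheafData.inclusion (le_sup_right : J ≤ I ⊔ J))
    ((Scheme.IdealSheafData.inclusion (le_sup_left : I ≤ I ⊔ J)).appTop a)
  obtain ⟨c, hc, -⟩ := exists_appTop_subschemeι_eq hIJ a b hb.symm
  exact ⟨c, hc⟩

/-- If `y` lies on `V(I)`, and if `Y` is the union of the affine closed subschemes `V(I)` and
`V(J)`, then `y` has an affine neighbourhood of the form `Y.basicOpen a`. -/
lemma exists_isAffineOpen_basicOpen_of_inf_eq_bot (hIJ : I ⊓ J = ⊥)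
    [IsAffine I.subscheme] [IsAffine J.subscheme] (y : Y) (hy : y ∈ I.support) :
    ∃ a : Γ(Y, ⊤), IsAffineOpen (Y.basicOpen a) ∧ y ∈ Y.basicOpen a := by
  have hcov := mem_support_or_mem_support hIJ
  have mem_range (K : Y.IdealSheafData) (x : Y) (hx : x ∈ K.support) : ∃ z, K.subschemeι z = x := by
    rwa [← Set.mem_range, Scheme.IdealSheafData.range_subschemeι]
  obtain ⟨U, hU, hyU⟩ := exists_isAffineOpen_mem y
  have hI := appTop_subschemeι_surjective_of_inf_eq_bot hIJ
  have hJ := appTop_subschemeι_surjective_of_inf_eq_bot (inf_comm I J ▸ hIJ)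
  obtain ⟨z, rfl⟩ := mem_range I y hy
  by_cases hyJ : I.subschemeι z ∈ J.support
  · obtain ⟨z', hz'⟩ := mem_range J _ hyJ
    obtain ⟨a, ha, ha'⟩ := exists_basicOpen_preimage_le _ hI z (I.subschemeι ⁻¹ᵁ U) hyU
    obtain ⟨b, hb, hb'⟩ := exists_basicOpen_preimage_le _ hJ z' (J.subschemeι ⁻¹ᵁ U)
      (by rw [← hz'] at hyU; exact hyU)
    refine ⟨a * b, isAffineOpen_basicOpen_of_le hU _ fun x hx ↦ ?_, ?_⟩
    · rw [Scheme.basicOpen_mul] at hx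
      rcases hcov x with h | h
      · obtain ⟨w, rfl⟩ := mem_range I x h
        exact ha' w hx.1
      · obtain ⟨w, rfl⟩ := mem_range J x h
        exact hb' w hx.2
    · rw [Scheme.basicOpen_mul]
      exact ⟨ha, hz' ▸ hb⟩
  · obtain ⟨r, hr, hr'⟩ := exists_basicOpen_le_of_isAffine
      (I.subschemeι ⁻¹ᵁ (U ⊓ J.support.compl)) z ⟨hyU, hyJ⟩
    have hnil : IsNilpotent
        ((Scheme.IdealSheafData.inclusion (le_sup_left : I ≤ I ⊔ J)).appTop r) := by
      have : IsAffine (I ⊔ J).subscheme := isAffine_of_isAffineHom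
        (Scheme.IdealSheafData.inclusion (le_sup_left : I ≤ I ⊔ J))
      rw [Scheme.isNilpotent_iff_basicOpen_eq_bot, eq_bot_iff]
      intro w hw
      have h₁ := hr' ((mem_basicOpen_app _ r w).mp hw)
      have h₂ : (I ⊔ J).subschemeι w ∈ (I ⊔ J).support := by
        rw [← SetLike.mem_coe, ← Scheme.IdealSheafData.range_subschemeι]; exact ⟨w, rfl⟩
      rw [Scheme.IdealSheafData.support_sup] at h₂
      rw [← Scheme.IdealSheafData.inclusion_subschemeι (le_sup_left : I ≤ I ⊔ J)] at h₂
      exact (h₁.2 h₂.2).elim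
    obtain ⟨n, hn⟩ := hnil
    obtain ⟨a, ha, ha'⟩ := exists_appTop_subschemeι_eq hIJ (r ^ (n + 1)) 0
      (by rw [map_pow, pow_succ, hn, zero_mul, map_zero])
    have haI (w : I.subscheme) : I.subschemeι w ∈ Y.basicOpen a ↔ w ∈ I.subscheme.basicOpen r := by
      rw [← mem_basicOpen_appTop, ha, Scheme.basicOpen_pow _ _ n.succ_pos]
    refine ⟨a, isAffineOpen_basicOpen_of_le hU _ fun x hx ↦ ?_, (haI z).mpr hr⟩
    rcases hcov x with h | h
    · obtain ⟨w, rfl⟩ := mem_range I x h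
      exact (hr' ((haI w).mp hx)).1
    · obtain ⟨w, rfl⟩ := mem_range J x h
      rw [← mem_basicOpen_appTop, ha', Scheme.basicOpen_zero] at hx
      exact hx.elim

lemma isAffine_of_inf_eq_bot (hIJ : I ⊓ J = ⊥) [IsAffine I.subscheme] [IsAffine J.subscheme] :
    IsAffine Y := by
  have hY : HasAffineBasicOpens Y := by
    intro y
    rcases mem_support_or_mem_support hIJ y with h | h
    · exact exists_isAffineOpen_basicOpen_of_inf_eq_bot hIJ y h
    · exact exists_isAffineOpen_basicOpen_of_inf_eq_bot (inf_comm I J ▸ hIJ) y h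
  have hI := appTop_subschemeι_surjective_of_inf_eq_bot hIJ
  have hJ := appTop_subschemeι_surjective_of_inf_eq_bot (inf_comm I J ▸ hIJ)
  obtain ⟨u, hu, hu'⟩ := exists_mem_affineIdeal_appTop_eq_one _ hI hY
  obtain ⟨v, hv, hv'⟩ := exists_mem_affineIdeal_appTop_eq_one _ hJ hY
  have h : (1 - u) * (1 - v) = 0 := eq_of_app_subschemeι_eq hIJ
    (by change I.subschemeι.appTop _ = I.subschemeι.appTop _; simp [hu'])
    (by change J.subschemeι.appTop _ = J.subschemeι.appTop _; simp [hv'])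
  refine isAffine_of_affineIdeal_eq_top ((Ideal.eq_top_iff_one _).mpr ?_)
  rw [show (1 : Γ(Y, ⊤)) = (1 - v) * u + v by linear_combination h]
  exact add_mem (Ideal.mul_mem_left _ _ hu) hv

lemma vanishingIdeal_ne_bot {Z : Closeds Y} (hZ : Z ≠ ⊤) :
    Scheme.IdealSheafData.vanishingIdeal Z ≠ ⊥ := by
  intro h
  have h' := Scheme.IdealSheafData.coe_support_vanishingIdeal Z
  rw [h] at h'
  exact hZ (SetLike.coe_injective h').symm

/-- The reducible step of the noetherian induction. -/
lemma isAffine_of_not_irreducibleSpace [IsReduced Y] (hY : ¬ IrreducibleSpace Y)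
    (ih : ∀ K : Y.IdealSheafData, K ≠ ⊥ → IsAffine K.subscheme) : IsAffine Y := by
  cases isEmpty_or_nonempty Y
  · infer_instance
  have : ¬ PreirreducibleSpace Y := fun h ↦ hY { toNonempty := ‹_› }
  rw [preirreducibleSpace_iff, isPreirreducible_iff_isClosed_union_isClosed] at this
  push Not at this
  obtain ⟨Z₁, Z₂, h₁, h₂, h, h₁', h₂'⟩ := this
  have := ih _ (vanishingIdeal_ne_bot (Z := ⟨Z₁, h₁⟩)
    fun h ↦ h₁' (congr((($h : Closeds Y) : Set Y)).ge))
  have := ih _ (vanishingIdeal_ne_bot (Z := ⟨Z₂, h₂⟩)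
    fun h ↦ h₂' (congr((($h : Closeds Y) : Set Y)).ge))
  refine isAffine_of_inf_eq_bot (I := Scheme.IdealSheafData.vanishingIdeal ⟨Z₁, h₁⟩)
    (J := Scheme.IdealSheafData.vanishingIdeal ⟨Z₂, h₂⟩) ?_
  rw [← Scheme.IdealSheafData.vanishingIdeal_sup, show (⟨Z₁, h₁⟩ ⊔ ⟨Z₂, h₂⟩ : Closeds Y) = ⊤ from
    top_le_iff.mp h, Scheme.IdealSheafData.vanishingIdeal_top, Scheme.nilradical_eq_bot]

end Union

section Algebra

lemma exists_linearMap_one_eq_one (R K M : Type*) [CommRing R] [Field K] [Algebra R K]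
    [IsDomain R] [IsFractionRing R K] [CommRing M] [Algebra R M]
    (h : Function.Injective (algebraMap R M)) : ∃ l : M →ₗ[R] K, l 1 = 1 := by
  have : Module.Flat R K := IsLocalization.flat K (nonZeroDivisors R)
  have hinj := Module.Flat.lTensor_preserves_injective_linearMap (M := K) (Algebra.linearMap R M) h
  have hne : (1 : K) ⊗ₜ[R] (1 : M) ≠ 0 := by
    have : (1 : K) ⊗ₜ[R] (1 : R) ≠ 0 := fun h ↦ by
      simpa using congr(TensorProduct.rid R K $h)
    simpa using hinj.ne this
  obtain ⟨g, hg⟩ := LinearMap.exists_leftInverse_of_injective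
    (LinearMap.toSpanSingleton K (TensorProduct R K M) (1 ⊗ₜ 1))
    (LinearMap.ker_eq_bot.mpr (smul_left_injective K hne))
  refine ⟨(g.restrictScalars R).comp (TensorProduct.mk R K M 1), ?_⟩
  simpa using congr($hg 1)

lemma exists_ne_zero_forall_smul_mem_range {A K N : Type*} [CommRing A] [IsDomain A] [Field K]
    [Algebra A K] [IsFractionRing A K] [AddCommGroup N] [Module A N] [Module.Finite A N]
    (ψ : N →ₗ[A] K) : ∃ t : A, t ≠ 0 ∧ ∀ v, ∃ a, algebraMap A K a = algebraMap A K t * ψ v := by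
  obtain ⟨t, ht, h⟩ := FractionalIdeal.isFractional_of_fg (S := nonZeroDivisors A)
    (I := LinearMap.range ψ)
    (Module.Finite.iff_fg.mp inferInstance)
  refine ⟨t, nonZeroDivisors.ne_zero ht, fun v ↦ ?_⟩
  obtain ⟨a, ha⟩ := h _ (LinearMap.mem_range_self ψ v)
  exact ⟨a, by rw [ha, Algebra.smul_def]⟩

/-- The largest ideal contained in the preimage of an additive subgroup under an additive map. -/
def idealOfAddSubgroup {B K : Type*} [CommRing B] [AddCommGroup K] (ψ : B →+ K)
    (T : AddSubgroup K) : Ideal B where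
  carrier := {b | ∀ v, ψ (b * v) ∈ T}
  zero_mem' v := by simp
  add_mem' ha hb v := by
    rw [add_mul, map_add]
    exact add_mem (ha v) (hb v)
  smul_mem' c b hb v := by
    rw [smul_eq_mul, mul_comm c, mul_assoc]
    exact hb _

end Algebra

section Integral

variable {X Y : Scheme.{u}} [AlgebraicGeometry.IsIntegral Y]

/-- The embedding of the sections over a nonempty open into the function field. -/
noncomputable def toFunctionField (U : Y.Opens) (hU : genericPoint Y ∈ U) :
    Γ(Y, U) →+* Y.functionField :=
  (Y.presheaf.germ U _ hU).hom

lemma toFunctionField_injective {U : Y.Opens} (hU : genericPoint Y ∈ U) :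
    Function.Injective (toFunctionField U hU) :=
  germ_injective_of_isIntegral Y _ hU

lemma toFunctionField_res {U V : Y.Opens} (h : U ≤ V) (hU : genericPoint Y ∈ U) (x : Γ(Y, V)) :
    toFunctionField U hU (res h x) = toFunctionField V (h hU) x :=
  Y.presheaf.germ_res_apply (homOfLE h) _ hU x

lemma genericPoint_mem_iff (U : Y.Opens) : genericPoint Y ∈ U ↔ (U : Set Y).Nonempty := by
  simpa using (genericPoint_spec Y).mem_open_set_iff U.isOpen

lemma genericPoint_mem_basicOpen {U : Y.Opens} {x : Γ(Y, U)}
    (hx : x ≠ 0) : genericPoint Y ∈ Y.basicOpen x := by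
  rw [genericPoint_mem_iff, Set.nonempty_iff_ne_empty]
  intro h
  exact hx (basicOpen_eq_bot_iff x |>.mp (Opens.ext h))

lemma isFractionRing_toFunctionField {U : Y.Opens} (hU : IsAffineOpen U)
    (hη : genericPoint Y ∈ U) :
    @IsFractionRing Γ(Y, U) _ Y.functionField _ (toFunctionField U hη).toAlgebra := by
  have : Nonempty U := ⟨⟨_, hη⟩⟩
  exact functionField_isFractionRing_of_isAffineOpen Y U hU

lemma exists_glue_of_toFunctionField {κ : Type*} (U : κ → Y.Opens) (hU : ⨆ i, U i = ⊤)
    (hη : ∀ i, genericPoint Y ∈ U i) (a : ∀ i, Γ(Y, U i)) (x : Y.functionField)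
    (h : ∀ i, toFunctionField (U i) (hη i) (a i) = x) :
    ∃ b : Γ(Y, ⊤), ∀ i, res le_top b = a i := by
  refine exists_glue U (fun _ ↦ le_top) hU.ge a fun i j ↦ ?_
  have hij : genericPoint Y ∈ U i ⊓ U j := ⟨hη i, hη j⟩
  apply toFunctionField_injective hij
  rw [toFunctionField_res, toFunctionField_res, h, h]

lemma ideal_ne_bot {I : Y.IdealSheafData} (hI : I ≠ ⊥) (U : Y.affineOpens)
    (hU : genericPoint Y ∈ U.1) : I.ideal U ≠ ⊥ := by
  intro h
  refine hI (Scheme.IdealSheafData.support_eq_top_iff.mp ?_)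
  have hη : genericPoint Y ∈ I.support := by
    rw [Scheme.IdealSheafData.mem_support_iff_of_mem hU, h]
    simp
  refine top_le_iff.mp ?_
  have := (I.support.isClosed.closure_subset_iff.mpr (Set.singleton_subset_iff.mpr hη))
  rw [(genericPoint_spec Y).def] at this
  exact this

lemma exists_pow_eq_mul_of_basicOpen_le {Z : Scheme.{u}} {U : Z.Opens} (hU : IsAffineOpen U)
    {x y : Γ(Z, U)} (h : Z.basicOpen x ≤ Z.basicOpen y) :
    ∃ (n : ℕ) (w : Γ(Z, U)), x ^ n = y * w := by
  have hy : IsUnit (res (Z.basicOpen_le x) y) := by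
    rw [← res_res h (Z.basicOpen_le y)]
    exact (RingedSpace.isUnit_res_basicOpen Z.toRingedSpace y).map (res h)
  obtain ⟨v, hv⟩ := hy.exists_right_inv
  obtain ⟨n, w, hw⟩ := exists_res_eq_pow_mul hU x v
  obtain ⟨m, hm⟩ := exists_pow_mul_eq_zero hU.isCompact (x := y * w - x ^ n) (f := x) (by
    rw [map_sub, map_mul, hw, map_pow]
    linear_combination res (Z.basicOpen_le x) x ^ n * hv)
  exact ⟨m + n, x ^ m * w, by linear_combination -hm⟩

variable (f : X ⟶ Y)

lemma app_injective_of_surjective (hf : Function.Surjective f) (U : Y.Opens) :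
    Function.Injective (f.app U) := by
  refine (injective_iff_map_eq_zero (f.app U).hom).mpr fun r hr ↦ ?_
  rw [← basicOpen_eq_bot_iff, eq_bot_iff]
  intro y hy
  obtain ⟨x, rfl⟩ := hf y
  rw [← mem_basicOpen_app] at hy
  have : f.app U r = 0 := hr
  rw [this, Scheme.basicOpen_zero] at hy
  exact hy

lemma exists_functional (hf : Function.Surjective f) {W : Y.Opens} (hW : IsAffineOpen W)
    (hη : genericPoint Y ∈ W) :
    ∃ l : Γ(X, f ⁻¹ᵁ W) →+ Y.functionField, l 1 = 1 ∧
      ∀ r m, l (f.app W r * m) = toFunctionField W hη r * l m := by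
  let := (toFunctionField W hη).toAlgebra
  let := (f.app W).hom.toAlgebra
  have := isFractionRing_toFunctionField hW hη
  have : IsDomain Γ(Y, W) := (toFunctionField_injective hη).isDomain _
  obtain ⟨l, hl⟩ := exists_linearMap_one_eq_one Γ(Y, W) Y.functionField Γ(X, f ⁻¹ᵁ W)
    (app_injective_of_surjective f hf W)
  exact ⟨l.toAddMonoidHom, hl, fun r m ↦ l.map_smul r m⟩

lemma exists_denominator [IsFinite f] {U : Y.Opens} (hU : IsAffineOpen U)
    (hη : genericPoint Y ∈ U) (l : Γ(X, f ⁻¹ᵁ U) →+ Y.functionField)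
    (hl : ∀ r m, l (f.app U r * m) = toFunctionField U hη r * l m) :
    ∃ t : Γ(Y, U), t ≠ 0 ∧ ∀ v, ∃ a, toFunctionField U hη a = toFunctionField U hη t * l v := by
  let := (toFunctionField U hη).toAlgebra
  let := (f.app U).hom.toAlgebra
  have := isFractionRing_toFunctionField hU hη
  have : IsDomain Γ(Y, U) := (toFunctionField_injective hη).isDomain _
  have : Module.Finite Γ(Y, U) Γ(X, f ⁻¹ᵁ U) := f.finite_app U hU
  exact exists_ne_zero_forall_smul_mem_range
    ({ l with map_smul' := hl } : Γ(X, f ⁻¹ᵁ U) →ₗ[Γ(Y, U)] Y.functionField)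

end Integral

section Integral

variable {X Y : Scheme.{u}} [AlgebraicGeometry.IsIntegral Y]

lemma exists_finite_affine_cover_genericPoint_mem (Y : Scheme.{u})
    [AlgebraicGeometry.IsIntegral Y] [CompactSpace Y] :
    ∃ s : Finset Y.affineOpens, ⨆ i : s, (i.1 : Y.Opens) = ⊤ ∧ ∀ i : s, genericPoint Y ∈ i.1.1 := by
  classical
  obtain ⟨s, hs⟩ := exists_finite_affine_cover Y
  refine ⟨s.filter fun i ↦ genericPoint Y ∈ i.1, ?_, fun i ↦ (Finset.mem_filter.mp i.2).2⟩
  rw [eq_top_iff]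
  intro y _
  obtain ⟨i, hi⟩ := Opens.mem_iSup.mp (hs.ge (Opens.mem_top y))
  exact Opens.mem_iSup.mpr
    ⟨⟨i.1, Finset.mem_filter.mpr ⟨i.2, (genericPoint_mem_iff _).mpr ⟨y, hi⟩⟩⟩, hi⟩

/-- The family of functionals on the preimages of the members of a finite affine cover. -/
lemma exists_functionals (f : X ⟶ Y) (hf : Function.Surjective f) {κ : Type*} [Finite κ]
    (U : κ → Y.Opens) (hη : ∀ i, genericPoint Y ∈ U i) :
    ∃ l : ∀ i, Γ(X, f ⁻¹ᵁ U i) →+ Y.functionField, (∀ i, l i 1 = 1) ∧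
      (∀ i r m, l i (f.app (U i) r * m) = toFunctionField (U i) (hη i) r * l i m) ∧
      ∀ b : Γ(X, ⊤), ∃ x, ∀ i, l i (res le_top b) = x := by
  obtain ⟨_, ⟨W, hW, rfl⟩, hηW, hWU⟩ := Y.isBasis_affineOpens.exists_subset_of_mem_open
    (a := genericPoint Y) (u := ⋂ i, (U i : Set Y)) (Set.mem_iInter.mpr hη)
    (isOpen_iInter_of_finite fun i ↦ (U i).2)
  have hWU (i : κ) : W ≤ U i := fun y hy ↦ Set.mem_iInter.mp (hWU hy) i
  obtain ⟨l, hl, hl'⟩ := exists_functional f hf hW hηW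
  refine ⟨fun i ↦ l.comp (res (f.preimage_mono (hWU i))).toAddMonoidHom, fun i ↦ ?_,
    fun i r m ↦ ?_, fun b ↦ ⟨l (res le_top b), fun i ↦ ?_⟩⟩
  · change l (res _ 1) = 1
    rw [map_one, hl]
  · change l (res _ (_ * _)) = _ * l (res _ _)
    rw [map_mul, ← app_res f (hWU i), hl', toFunctionField_res (hWU i)]
  · change l (res _ (res _ _)) = _
    rw [res_res]

/-- On an integral noetherian scheme admitting a finite surjection from an affine scheme, global
sections lift from a nontrivial closed subscheme, provided these closed subschemes are affine. -/
lemma appTop_subschemeι_surjective [IsNoetherian Y] [IsAffine X] (f : X ⟶ Y) [IsFinite f]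
    (hf : Function.Surjective f)
    (ih : ∀ K : Y.IdealSheafData, K ≠ ⊥ → IsAffine K.subscheme)
    {I : Y.IdealSheafData} (hI : I ≠ ⊥) : Function.Surjective I.subschemeι.appTop := by
  obtain ⟨κ, hκ, hη⟩ := exists_finite_affine_cover_genericPoint_mem Y
  let U : κ → Y.Opens := fun i ↦ i.1
  have hU (i : κ) : IsAffineOpen (U i) := i.1.2
  let φ (i : κ) : Γ(Y, U i) →+* Y.functionField := toFunctionField (U i) (hη i)
  obtain ⟨l, hl₁, hl, hlc⟩ := exists_functionals f hf U hη
  let 𝔥' (i : κ) : Ideal Γ(X, f ⁻¹ᵁ U i) :=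
    idealOfAddSubgroup (l i) ((I.ideal i.1).toAddSubgroup.map (φ i).toAddMonoidHom)
  let 𝔥 : Ideal Γ(X, ⊤) := ⨅ i, (𝔥' i).comap (res le_top)
  have h𝔥 (i : κ) : 𝔥.map (res le_top) ≤ 𝔥' i :=
    Ideal.map_le_iff_le_comap.mpr (iInf_le _ i)
  have hmem (i : κ) (w : Γ(X, f ⁻¹ᵁ U i)) (hw : w ∈ 𝔥.map (res le_top)) :
      ∃ t ∈ I.ideal i.1, φ i t = l i w := by
    obtain ⟨t, ht, ht'⟩ := h𝔥 i hw 1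
    exact ⟨t, ht, ht'.trans (by rw [mul_one])⟩
  let H := Scheme.IdealSheafData.ofIdealTop 𝔥
  let I' := H.map f
  have hI' : I' ≤ I := by
    refine Scheme.IdealSheafData.le_of_iSup_eq_top (fun i : κ ↦ i.1) hκ fun i a ha ↦ ?_
    rw [Scheme.IdealSheafData.ideal_map_of_isAffineHom] at ha
    obtain ⟨t, ht, ht'⟩ := hmem i _ ha
    have := hl i a 1
    rw [mul_one, hl₁, mul_one] at this
    rwa [← toFunctionField_injective (hη i) (ht'.trans this)]
  have hI'₀ : I' ≠ ⊥ := by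
    intro h₀
    choose t ht₀ ht using fun i ↦ exists_denominator f (hU i) (hη i) (l i) (hl i)
    choose z hz hz₀ using fun i ↦ Submodule.exists_mem_ne_zero_of_ne_bot
      (ideal_ne_bot hI i.1 (hη i))
    have hηD : genericPoint Y ∈ ⨅ i, Y.basicOpen (t i * z i) := by
      rw [← SetLike.mem_coe, Opens.coe_iInf, Set.mem_iInter]
      intro i
      rw [SetLike.mem_coe, Scheme.basicOpen_mul]
      exact ⟨genericPoint_mem_basicOpen (ht₀ i), genericPoint_mem_basicOpen (hz₀ i)⟩
    have hsupp : genericPoint Y ∈ I'.support := by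
      rw [h₀]
      trivial
    rw [Scheme.IdealSheafData.support_map, Closeds.mem_closure,
      (f.isClosedMap _ H.support.isClosed).closure_eq] at hsupp
    obtain ⟨p, hp, hpη⟩ := hsupp
    obtain ⟨c, hc, hcD⟩ := exists_basicOpen_le_of_isAffine
      (f ⁻¹ᵁ ⨅ i, Y.basicOpen (t i * z i)) p (by rwa [Scheme.Hom.mem_preimage, hpη])
    suffices hc𝔥 : c ∈ 𝔥.radical by
      obtain ⟨n, hn⟩ := hc𝔥
      have hp' : p ∈ X.zeroLocus (U := ⊤) (𝔥 : Set Γ(X, ⊤)) := hp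
      refine (Scheme.mem_zeroLocus_iff _ _ _).mp hp' (c ^ (n + 1)) ?_ ?_
      · rw [pow_succ]
        exact Ideal.mul_mem_right _ _ hn
      · rwa [Scheme.basicOpen_pow _ _ n.succ_pos]
    have hn (i : κ) : ∃ n : ℕ, res le_top c ^ n ∈ 𝔥' i := by
      obtain ⟨n, w, hw⟩ := exists_pow_eq_mul_of_basicOpen_le ((hU i).preimage f)
        (x := res le_top c) (y := f.app (U i) (t i * z i)) (by
          rw [basicOpen_res, ← Scheme.preimage_basicOpen]
          exact inf_le_right.trans (hcD.trans (f.preimage_mono (iInf_le _ i))))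
      refine ⟨n, fun v ↦ ?_⟩
      obtain ⟨a, ha⟩ := ht i (w * v)
      refine ⟨a * z i, Ideal.mul_mem_left _ _ (hz i), ?_⟩
      change φ i (a * z i) = _
      rw [hw, mul_assoc, hl, map_mul, map_mul, mul_right_comm, ← ha]
    choose n hn using hn
    refine ⟨∑ i, n i, (Submodule.mem_iInf _).mpr fun i ↦ ?_⟩
    rw [Ideal.mem_comap, map_pow]
    exact Ideal.pow_mem_of_pow_mem _ (hn i)
      (Finset.single_le_sum (fun _ _ ↦ Nat.zero_le _) (Finset.mem_univ i))
  have := ih I' hI'₀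
  intro s
  obtain ⟨s', rfl⟩ := appTop_surjective_of_isAffine (Scheme.IdealSheafData.inclusion hI') s
  let g := Scheme.IdealSheafData.subschemeMap H I' f le_rfl
  obtain ⟨b, hb⟩ := appTop_surjective_of_isAffine H.subschemeι (g.appTop s')
  have hloc (i : κ) : ∃ a : Γ(Y, U i), φ i a = l i (res le_top b) ∧
      I.subschemeι.app (U i) a =
        res le_top ((Scheme.IdealSheafData.inclusion hI').appTop s') := by
    obtain ⟨x, hx⟩ := app_surjective_of_isClosedImmersion I'.subschemeι (hU i) (res le_top s')
    have h₁ : f.app (U i) x - res le_top b ∈ H.ideal ⟨_, (hU i).preimage f⟩ := by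
      rw [← app_subschemeι_eq_zero_iff, map_sub, app_res, sub_eq_zero]
      have := app_comp_eq_res
        (Scheme.IdealSheafData.subschemeMap_subschemeι H I' f le_rfl) hx
      rw [Scheme.Hom.comp_app] at this
      exact this.trans congr(res le_top $hb.symm)
    obtain ⟨t, ht, ht'⟩ := hmem i _ h₁
    refine ⟨x - t, ?_, ?_⟩
    · have := hl i x 1
      rw [mul_one, hl₁, mul_one] at this
      rw [map_sub, ht', map_sub, this]
      exact sub_sub_cancel _ _
    · rw [map_sub, (app_subschemeι_eq_zero_iff I i.1 t).mpr ht, sub_zero]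
      exact app_comp_eq_res (Scheme.IdealSheafData.inclusion_subschemeι hI') hx
  choose a ha ha' using hloc
  obtain ⟨c, hc⟩ := hlc b
  obtain ⟨y, hy⟩ := exists_glue_of_toFunctionField U hκ hη a c fun i ↦ (ha i).trans (hc i)
  exact ⟨y, appTop_eq_of_forall_app _ _ _ U hκ fun i ↦ by rw [hy, ha']⟩

end Integral

section IntegralAffine

variable {Y : Scheme.{u}} [AlgebraicGeometry.IsIntegral Y]

lemma exists_isAffineOpen_basicOpen_of_ne_genericPoint
    (ih : ∀ K : Y.IdealSheafData, K ≠ ⊥ → IsAffine K.subscheme)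
    (hs : ∀ K : Y.IdealSheafData, K ≠ ⊥ → Function.Surjective K.subschemeι.appTop)
    {y : Y} (hy : y ≠ genericPoint Y) :
    ∃ a : Γ(Y, ⊤), IsAffineOpen (Y.basicOpen a) ∧ y ∈ Y.basicOpen a := by
  obtain ⟨U, hU, hyU⟩ := exists_isAffineOpen_mem y
  let Z : Closeds Y := ⟨(U : Set Y)ᶜ ∪ closure {y}, U.isOpen.isClosed_compl.union isClosed_closure⟩
  have hZ : Z ≠ ⊤ := by
    intro h
    have hη : genericPoint Y ∈ (U : Set Y)ᶜ ∪ closure {y} :=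
      congr((($h : Closeds Y) : Set Y)).ge (Set.mem_univ _)
    rcases hη with hη | hη
    · exact hη ((genericPoint_mem_iff U).mpr ⟨y, hyU⟩)
    · exact hy ((specializes_iff_mem_closure.mpr hη).antisymm
        (genericPoint_specializes y)).eq
  have hK := vanishingIdeal_ne_bot hZ
  have := ih _ hK
  have hr : Set.range (Scheme.IdealSheafData.vanishingIdeal Z).subschemeι = Z := by
    rw [Scheme.IdealSheafData.range_subschemeι,
      Scheme.IdealSheafData.coe_support_vanishingIdeal]
  obtain ⟨z, hz⟩ : y ∈ Set.range (Scheme.IdealSheafData.vanishingIdeal Z).subschemeι := by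
    rw [hr]
    exact Or.inr (subset_closure rfl)
  obtain ⟨a, ha, ha'⟩ := exists_basicOpen_preimage_le _ (hs _ hK) z (_ ⁻¹ᵁ U)
    (by rwa [Scheme.Hom.mem_preimage, hz])
  refine ⟨a, isAffineOpen_basicOpen_of_le hU a fun y' hy' ↦ ?_, hz ▸ ha⟩
  by_contra hyU'
  obtain ⟨z', rfl⟩ : y' ∈ Set.range (Scheme.IdealSheafData.vanishingIdeal Z).subschemeι := by
    rw [hr]
    exact Or.inl hyU'
  exact hyU' (ha' z' hy')

lemma hasAffineBasicOpens_of_ne_genericPoint {y : Y} (hy : y ≠ genericPoint Y)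
    (ih : ∀ K : Y.IdealSheafData, K ≠ ⊥ → IsAffine K.subscheme)
    (hs : ∀ K : Y.IdealSheafData, K ≠ ⊥ → Function.Surjective K.subschemeι.appTop) :
    HasAffineBasicOpens Y := by
  intro x
  by_cases hx : x = genericPoint Y
  · obtain ⟨a, ha, hya⟩ := exists_isAffineOpen_basicOpen_of_ne_genericPoint ih hs hy
    exact ⟨a, ha, hx ▸ (genericPoint_mem_iff _).mpr ⟨y, hya⟩⟩
  · exact exists_isAffineOpen_basicOpen_of_ne_genericPoint ih hs hx

lemma exists_eq_mul_of_appTop_subschemeι_eq_zero [CompactSpace Y] {a b : Γ(Y, ⊤)} (ha : a ≠ 0)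
    (hb : (Scheme.IdealSheafData.ofIdealTop (Ideal.span {a})).subschemeι.appTop b = 0) :
    ∃ w, b = a * w := by
  obtain ⟨κ, hκ, hη⟩ := exists_finite_affine_cover_genericPoint_mem Y
  have h (i : κ) : ∃ w : Γ(Y, i.1.1), res le_top b = res le_top a * w := by
    have hi : res le_top b ∈
        (Scheme.IdealSheafData.ofIdealTop (Ideal.span {a})).ideal i.1 := by
      rw [← app_subschemeι_eq_zero_iff, app_res]
      exact congr(res le_top $hb).trans (map_zero _)
    rw [Scheme.IdealSheafData.ofIdealTop_ideal, Ideal.map_span, Set.image_singleton,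
      Ideal.mem_span_singleton] at hi
    exact hi
  choose w hw using h
  have hφ : toFunctionField ⊤ (Opens.mem_top _) a ≠ 0 :=
    (map_ne_zero_iff _ (toFunctionField_injective _)).mpr ha
  obtain ⟨v, hv⟩ := exists_glue_of_toFunctionField (fun i : κ ↦ i.1.1) hκ hη w
    (toFunctionField ⊤ (Opens.mem_top _) b / toFunctionField ⊤ (Opens.mem_top _) a) fun i ↦ by
      rw [eq_div_iff hφ, ← toFunctionField_res le_top (hη i), ← toFunctionField_res le_top (hη i),
        hw, map_mul, mul_comm]
  refine ⟨v, res_injective_of_cover (fun i : κ ↦ i.1.1) (fun _ ↦ le_top) hκ.ge fun i ↦ ?_⟩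
  rw [map_mul, hv, hw]

/-- The integral step of the noetherian induction. -/
lemma isAffine_of_isIntegral {X : Scheme.{u}} [IsNoetherian Y] [IsAffine X] (f : X ⟶ Y)
    [IsFinite f] (hf : Function.Surjective f)
    (ih : ∀ K : Y.IdealSheafData, K ≠ ⊥ → IsAffine K.subscheme) : IsAffine Y := by
  by_cases hY : ∃ y : Y, y ≠ genericPoint Y
  · obtain ⟨y, hy⟩ := hY
    have hs (K : Y.IdealSheafData) (hK : K ≠ ⊥) := appTop_subschemeι_surjective f hf ih hK
    have hY := hasAffineBasicOpens_of_ne_genericPoint hy ih hs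
    obtain ⟨a, ha, hηa⟩ := hY (genericPoint Y)
    have ha₀ : a ≠ 0 := by
      rintro rfl
      rw [Scheme.basicOpen_zero] at hηa
      exact hηa
    let I := Scheme.IdealSheafData.ofIdealTop (Ideal.span {a})
    have hI : I ≠ ⊥ := by
      intro h
      have hη : genericPoint Y ∈ I.support := by
        rw [h]
        trivial
      exact (Scheme.mem_zeroLocus_iff _ _ _).mp
        (show genericPoint Y ∈ Y.zeroLocus (U := ⊤) (Ideal.span {a} : Set Γ(Y, ⊤)) from hη) a
        (Ideal.mem_span_singleton_self a) hηa
    have := ih I hI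
    obtain ⟨u, hu, hu'⟩ := exists_mem_affineIdeal_appTop_eq_one I.subschemeι (hs I hI) hY
    obtain ⟨w, hw⟩ := exists_eq_mul_of_appTop_subschemeι_eq_zero (b := 1 - u) ha₀
      (by rw [map_sub, map_one, hu', sub_self])
    refine isAffine_of_affineIdeal_eq_top ((Ideal.eq_top_iff_one _).mpr ?_)
    rw [← sub_add_cancel 1 u, hw]
    exact add_mem (Ideal.mul_mem_right _ _ (Ideal.subset_span ha)) hu
  · push Not at hY
    have : Subsingleton Y := ⟨fun x y ↦ (hY x).trans (hY y).symm⟩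
    infer_instance

end IntegralAffine

section Induction

variable {X Y : Scheme.{u}}

instance wellFoundedGT_idealSheafData (Y : Scheme.{u}) [IsNoetherian Y] :
    WellFoundedGT Y.IdealSheafData := by
  obtain ⟨κ, hκ⟩ := exists_finite_affine_cover Y
  have (i : κ) : IsNoetherianRing Γ(Y, i.1) := IsLocallyNoetherian.component_noetherian i.1
  let F (I : Y.IdealSheafData) : ∀ i : κ, (Ideal Γ(Y, i.1))ᵒᵈ :=
    fun i ↦ OrderDual.toDual (I.ideal i.1)
  have hF : StrictAnti F := (show Antitone F from fun _ _ h i ↦ h i.1).strictAnti_of_injective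
    fun I J h ↦ Scheme.IdealSheafData.ext_of_iSup_eq_top (fun i : κ ↦ i.1) hκ (congrFun h)
  exact hF.wellFoundedGT

lemma lt_ker_comp_subschemeι {I : Y.IdealSheafData} {K : I.subscheme.IdealSheafData}
    (hK : K ≠ ⊥) : I < (K.subschemeι ≫ I.subschemeι).ker := by
  have hle : I ≤ (K.subschemeι ≫ I.subschemeι).ker :=
    I.ker_subschemeι.ge.trans (Scheme.Hom.le_ker_comp _ _)
  refine hle.lt_of_not_ge fun h ↦ hK (le_bot_iff.mp ?_)
  refine Scheme.IdealSheafData.le_of_iSup_eq_top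
    (fun U : Y.affineOpens ↦ ⟨_, U.2.preimage I.subschemeι⟩) ?_ fun U x hx ↦ ?_
  · refine eq_top_iff.mpr fun z _ ↦ ?_
    obtain ⟨U, hU, hz⟩ := exists_isAffineOpen_mem (I.subschemeι z)
    exact Opens.mem_iSup.mpr ⟨⟨U, hU⟩, hz⟩
  · obtain ⟨y, rfl⟩ := app_surjective_of_isClosedImmersion I.subschemeι U.2 x
    rw [← Scheme.IdealSheafData.map_ker, K.ker_subschemeι] at h
    have hy : y ∈ (K.map I.subschemeι).ideal U := by
      rw [Scheme.IdealSheafData.ideal_map_of_isAffineHom]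
      exact hx
    exact (app_subschemeι_eq_zero_iff I U y).mpr (h U hy)

/-- Chevalley's theorem for all closed subschemes of the target, by noetherian induction. -/
lemma isAffine_subscheme [IsNoetherian Y] [IsAffine X] (f : X ⟶ Y) [IsFinite f]
    (hf : Function.Surjective f) (I : Y.IdealSheafData) : IsAffine I.subscheme := by
  induction I using WellFoundedGT.induction with
  | ind I IH =>
    have ih (K : I.subscheme.IdealSheafData) (hK : K ≠ ⊥) : IsAffine K.subscheme :=
      have := IH _ (lt_ker_comp_subschemeι hK)
      .of_isIso (K.subschemeι ≫ I.subschemeι).toImage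
    have : IsLocallyNoetherian I.subscheme :=
      LocallyOfFiniteType.isLocallyNoetherian I.subschemeι
    have : CompactSpace I.subscheme := QuasiCompact.compactSpace_of_compactSpace I.subschemeι
    have : IsNoetherian I.subscheme := {}
    by_cases hred : IsReduced I.subscheme
    · by_cases hirr : IrreducibleSpace I.subscheme
      · have := isIntegral_of_irreducibleSpace_of_isReduced I.subscheme
        have : IsAffine (Limits.pullback f I.subschemeι) :=
          isAffine_of_isAffineHom (Limits.pullback.fst f I.subschemeι)
        have : Surjective f := ⟨hf⟩
        exact isAffine_of_isIntegral (Limits.pullback.snd f I.subschemeι)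
          (Limits.pullback.snd f I.subschemeι).surjective ih
      · exact isAffine_of_not_irreducibleSpace hirr ih
    · exact isAffine_of_not_isReduced hred ih

end Induction

end Chevalley

/-- Chevalley's theorem: if `f : X ⟶ Y` is a finite surjective morphism of schemes with `Y`
noetherian and `X` affine, then `Y` is affine. -/
theorem isAffine_of_isFinite_surjective {X Y : AlgebraicGeometry.Scheme}
    (f : X ⟶ Y) [IsFinite f] (hf : Function.Surjective f.base)
    [IsNoetherian Y] [IsAffine X] : IsAffine Y := by
  have := Chevalley.isAffine_subscheme f hf ⊥
  exact .of_isIso (CategoryTheory.inv (Scheme.IdealSheafData.subschemeι (⊥ : Y.IdealSheafData)))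
end

section
/- Let k be a field, let n ≥ 0, and let d : Fin (n+1) → ℕ satisfy d i ≥ 1 for all i. Grade the polynomial ring A = MvPolynomial (Fin (n+1)) k by weighted degree with respect to d, the m-th graded piece being the submodule of weighted homogeneous polynomials of weighted degree m (so the variable X_i has degree d i). Let f ∈ A be weighted homogeneous of weighted degree m with m > 0, and let U denote the basic open subscheme D₊(f) of Proj A (the open complement of the vanishing locus V₊(f)). If Y is a noetherian scheme admitting a finite surjective morphism U ⟶ Y, then Y is an affine scheme. -/
open AlgebraicGeometry MvPolynomial

noncomputable instance (k : Type*) [CommRing k] {σ : Type*} (w : σ → ℕ) :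
    GradedAlgebra (weightedHomogeneousSubmodule k w) :=
  MvPolynomial.weightedGradedAlgebra k w

section Chevalley

open CategoryTheory

universe u

namespace AlgebraicGeometry.Scheme

/-- Restriction of sections along an inclusion of opens, as a ring homomorphism. -/
noncomputable def res {Y : Scheme.{u}} {U V : Y.Opens} (h : U ≤ V) : Γ(Y, V) →+* Γ(Y, U) :=
  (Y.presheaf.map (homOfLE h).op).hom

/-- Pullback of sections along a morphism, as a ring homomorphism. -/
noncomputable def pull {X Y : Scheme.{u}} (π : X ⟶ Y) (U : Y.Opens) :
    Γ(Y, U) →+* Γ(X, π ⁻¹ᵁ U) :=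
  (π.app U).hom

section

variable {X Y : Scheme.{u}} (π : X ⟶ Y)

theorem res_res {U V W : Y.Opens} (h : U ≤ V) (h' : V ≤ W) (s : Γ(Y, W)) :
    res h (res h' s) = res (h.trans h') s := by
  simp only [res, ← CommRingCat.comp_apply, ← Functor.map_comp, ← op_comp, homOfLE_comp]

@[simp]
theorem res_rfl {U : Y.Opens} (h : U ≤ U) (s : Γ(Y, U)) : res h s = s := by
  simp [res]

theorem res_pull {U V : Y.Opens} (h : U ≤ V) (s : Γ(Y, V)) :
    res (π.preimage_mono h) (pull π V s) = pull π U (res h s) := by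
  simp [res, pull]

theorem basicOpen_res' {U V : Y.Opens} (h : U ≤ V) (s : Γ(Y, V)) :
    Y.basicOpen (res h s) = U ⊓ Y.basicOpen s :=
  Y.basicOpen_res s _

theorem preimage_basicOpen' {U : Y.Opens} (s : Γ(Y, U)) :
    π ⁻¹ᵁ Y.basicOpen s = X.basicOpen (pull π U s) :=
  π.preimage_basicOpen s

/-- Pullback of global sections along a morphism, as a ring homomorphism. -/
noncomputable def gpull : Γ(Y, ⊤) →+* Γ(X, ⊤) :=
  π.appTop.hom

theorem res_gpull (U : Y.Opens) (s : Γ(Y, ⊤)) :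
    res (le_top : π ⁻¹ᵁ U ≤ ⊤) (gpull π s) = pull π U (res le_top s) :=
  res_pull π le_top s

theorem preimage_basicOpen_gpull (s : Γ(Y, ⊤)) :
    π ⁻¹ᵁ Y.basicOpen s = X.basicOpen (gpull π s) :=
  π.preimage_basicOpen s

/-- Two sections agreeing on the members of an open cover are equal. -/
theorem section_ext_of_cover {ι : Type*} {W : Y.Opens} (U : ι → Y.Opens) (hU : ∀ i, U i ≤ W)
    (hW : W ≤ ⨆ i, U i) {s t : Γ(Y, W)} (h : ∀ i, res (hU i) s = res (hU i) t) : s = t :=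
  Y.sheaf.eq_of_locally_eq' U W (fun i => homOfLE (hU i)) hW s t h

/-- Two sections agreeing on all smaller affine opens are equal. -/
theorem section_ext_of_affineOpens {W : Y.Opens} {s t : Γ(Y, W)}
    (h : ∀ (U : Y.affineOpens) (hU : U.1 ≤ W), res hU s = res hU t) : s = t := by
  refine section_ext_of_cover (fun U : { U : Y.affineOpens // U.1 ≤ W } => U.1.1)
    (fun U => U.2) (fun y hy => ?_) (fun U => h U.1 U.2)
  obtain ⟨U, hU, hyU, hUW⟩ :=
    TopologicalSpace.Opens.isBasis_iff_nbhd.mp Y.isBasis_affineOpens hy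
  exact TopologicalSpace.Opens.mem_iSup.mpr ⟨⟨⟨U, hU⟩, hUW⟩, hyU⟩

/-- Gluing of sections over a cover of the whole scheme. -/
theorem exists_glue {ι : Type*} (U : ι → Y.Opens) (hU : ⨆ i, U i = ⊤)
    (s : ∀ i, Γ(Y, U i))
    (h : ∀ i j, res (inf_le_left : U i ⊓ U j ≤ U i) (s i) = res inf_le_right (s j)) :
    ∃ t : Γ(Y, ⊤), ∀ i, res le_top t = s i :=
  (Y.sheaf.existsUnique_gluing' U ⊤ (fun _ => homOfLE le_top) hU.ge s h).exists

/-- A section over the basic open of `f` extends after multiplication by a power of `f`. -/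
theorem exists_res_eq_pow_mul {U : Y.Opens} (hU : IsAffineOpen U) (f : Γ(Y, U))
    {W : Y.Opens} (hW : W = Y.basicOpen f) (hWU : W ≤ U) (x : Γ(Y, W)) :
    ∃ (n : ℕ) (y : Γ(Y, U)), res hWU y = res hWU f ^ n * x := by
  subst hW
  exact exists_eq_pow_mul_of_isAffineOpen Y U hU f x

/-- A section vanishing on the basic open of `f` is killed by a power of `f`. -/
theorem exists_pow_mul_eq_zero {U : Y.Opens} (hU : IsCompact (U : Set Y)) (x f : Γ(Y, U))
    {W : Y.Opens} (hW : W = Y.basicOpen f) (hWU : W ≤ U) (h : res hWU x = 0) :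
    ∃ n : ℕ, f ^ n * x = 0 := by
  subst hW
  exact exists_pow_mul_eq_zero_of_res_basicOpen_eq_zero_of_isCompact Y hU x f h

theorem span_eq_top_of_forall_mem_basicOpen [IsAffine X] (S : Set Γ(X, ⊤))
    (h : ∀ x : X, ∃ a ∈ S, x ∈ X.basicOpen a) : Ideal.span S = ⊤ := by
  rw [← (isAffineOpen_top X).self_le_iSup_basicOpen_iff]
  intro x _
  obtain ⟨a, ha, hx⟩ := h x
  exact TopologicalSpace.Opens.mem_iSup.mpr ⟨⟨a, ha⟩, hx⟩

theorem exists_mem_affineOpens (y : Y) (W : Y.Opens) (hy : y ∈ W) :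
    ∃ V : Y.affineOpens, y ∈ V.1 ∧ V.1 ≤ W := by
  obtain ⟨U, hU, hyU, hUW⟩ :=
    TopologicalSpace.Opens.isBasis_iff_nbhd.mp Y.isBasis_affineOpens hy
  exact ⟨⟨U, hU⟩, hyU, hUW⟩

/-- If `X` is affine, finitely many functions generating the unit ideal have basic opens
mapping into affine opens of `Y`. -/
theorem exists_finset_basicOpen_le_preimage [IsAffine X] :
    ∃ (s : Finset Γ(X, ⊤)) (V : s → Y.affineOpens), Ideal.span (s : Set Γ(X, ⊤)) = ⊤ ∧
      ∀ a : s, X.basicOpen a.1 ≤ π ⁻¹ᵁ (V a).1 := by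
  let S : Set Γ(X, ⊤) := { a | ∃ V : Y.affineOpens, X.basicOpen a ≤ π ⁻¹ᵁ V.1 }
  have hS : Ideal.span S = ⊤ := by
    refine span_eq_top_of_forall_mem_basicOpen S fun x => ?_
    obtain ⟨V, hV, -⟩ := exists_mem_affineOpens (π x) ⊤ trivial
    obtain ⟨a, ha, hxa⟩ := (isAffineOpen_top X).exists_basicOpen_le (V := π ⁻¹ᵁ V.1) ⟨x, hV⟩ trivial
    exact ⟨a, ⟨V, ha⟩, hxa⟩
  obtain ⟨s, hsS, hs⟩ := (Ideal.span_eq_top_iff_finite S).mp hS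
  choose V hV using fun a : s => hsS a.2
  exact ⟨s, V, hs, hV⟩

theorem iSup_eq_top_of_basicOpen_le_preimage [Surjective π] {s : Finset Γ(X, ⊤)}
    {V : s → Y.affineOpens} (hs : Ideal.span (s : Set Γ(X, ⊤)) = ⊤)
    (hV : ∀ a : s, X.basicOpen a.1 ≤ π ⁻¹ᵁ (V a).1) : ⨆ a, (V a).1 = ⊤ := by
  refine top_le_iff.mp fun y _ => ?_
  obtain ⟨x, rfl⟩ := π.surjective y
  have := iSup_basicOpen_of_span_eq_top ⊤ (s : Set Γ(X, ⊤)) hs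
  have hx : x ∈ ⨆ i ∈ (s : Set Γ(X, ⊤)), X.basicOpen i := by
    rw [this]; trivial
  simp only [TopologicalSpace.Opens.mem_iSup] at hx
  obtain ⟨a, ha, hxa⟩ := hx
  exact TopologicalSpace.Opens.mem_iSup.mpr ⟨⟨a, ha⟩, hV ⟨a, ha⟩ hxa⟩

/-- The basic open of a global section contained in an affine open is affine. -/
theorem isAffineOpen_basicOpen_of_le {V : Y.Opens} (hV : IsAffineOpen V) (s : Γ(Y, ⊤))
    (h : Y.basicOpen s ≤ V) : IsAffineOpen (Y.basicOpen s) := by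
  have : Y.basicOpen (res (le_top : V ≤ ⊤) s) = Y.basicOpen s := by
    rw [basicOpen_res', inf_eq_right.mpr h]
  exact this ▸ hV.basicOpen _

/-- A partition of unity by powers. -/
theorem exists_sum_mul_pow_eq_one {R : Type*} [CommRing R] {s : Finset R}
    (hs : Ideal.span (s : Set R) = ⊤) (N : ℕ) : ∃ e : s → R, ∑ k, e k * k.1 ^ N = 1 := by
  have := Ideal.span_pow_eq_top _ hs N
  rw [Set.image_eq_range, Ideal.eq_top_iff_one] at this
  exact Ideal.mem_span_range_iff_exists_fun.mp this

/-- A noetherian scheme has a finite cover by affine opens. -/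
theorem exists_finite_affineOpens_cover (Y : Scheme.{u}) [CompactSpace Y] :
    ∃ s : Finset Y.affineOpens, ⨆ U : s, (U.1 : Y.Opens) = ⊤ := by
  obtain ⟨t, ht⟩ := isCompact_univ.elim_finite_subcover
    (fun U : Y.affineOpens => ((U : Y.Opens) : Set Y)) (fun U => U.1.isOpen)
    (fun y _ => by
      have : y ∈ (⨆ U : Y.affineOpens, (U : Y.Opens)) := by
        rw [iSup_affineOpens_eq_top]; trivial
      simpa using this)
  refine ⟨t, top_le_iff.mp fun y _ => ?_⟩
  simpa using ht (Set.mem_univ y)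

end

section SquareZero

variable {Y : Scheme.{u}} (I : Y.IdealSheafData)

theorem pull_subschemeι_eq_zero_iff (U : Y.affineOpens) (x : Γ(Y, U.1)) :
    pull I.subschemeι U.1 x = 0 ↔ x ∈ I.ideal U := by
  rw [← I.ker_subschemeι_app U, RingHom.mem_ker]; rfl

theorem pull_subschemeι_surjective (U : Y.affineOpens) :
    Function.Surjective (pull I.subschemeι U.1) :=
  I.subschemeι_app_surjective U

theorem mul_eq_zero_of_pull_subschemeι (hI : I * I = ⊥) {W : Y.Opens} {x y : Γ(Y, W)}
    (hx : pull I.subschemeι W x = 0) (hy : pull I.subschemeι W y = 0) : x * y = 0 := by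
  refine section_ext_of_affineOpens fun U hU => ?_
  have mem {z : Γ(Y, W)} (hz : pull I.subschemeι W z = 0) : res hU z ∈ I.ideal U := by
    rw [← pull_subschemeι_eq_zero_iff, ← res_pull, hz, map_zero]
  have : res hU x * res hU y ∈ (I * I).ideal U := by
    rw [IdealSheafData.ideal_mul]
    exact Ideal.mul_mem_mul (mem hx) (mem hy)
  rw [map_mul, map_zero]
  simpa [hI] using this

theorem surjective_subschemeι_of_mul_self (hI : I * I = ⊥) : Surjective I.subschemeι := by
  constructor
  rw [← Set.range_eq_univ, I.range_subschemeι]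
  have := congr_arg IdealSheafData.support hI
  rw [IdealSheafData.support_mul] at this
  simp at this
  rw [this]; rfl

/-- Extending a difference of local lifts, up to a power of `g`. -/
theorem exists_extend_sub (U V : Y.affineOpens) [CompactSpace Y] [QuasiSeparatedSpace Y]
    (b : Γ(Y, U.1)) (b' : Γ(Y, V.1)) (g : Γ(Y, U.1)) (hgV : Y.basicOpen g ≤ V.1)
    (hb : pull I.subschemeι _ (res (Y.basicOpen_le g) b) =
      pull I.subschemeι _ (res hgV b')) :
    ∃ N₀ : ℕ, ∀ N ≥ N₀, ∃ n : Γ(Y, U.1), pull I.subschemeι U.1 n = 0 ∧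
      res (Y.basicOpen_le g) n =
        res (Y.basicOpen_le g) g ^ N * (res (Y.basicOpen_le g) b - res hgV b') := by
  obtain ⟨p, n, hn⟩ := exists_res_eq_pow_mul U.2 g rfl (Y.basicOpen_le g)
    (res (Y.basicOpen_le g) b - res hgV b')
  have hcpt : IsCompact ((I.subschemeι ⁻¹ᵁ U.1 : I.subscheme.Opens) : Set I.subscheme) :=
    (U.2.preimage I.subschemeι).isCompact
  obtain ⟨q, hq⟩ := exists_pow_mul_eq_zero hcpt (pull I.subschemeι U.1 n)
    (pull I.subschemeι U.1 g) (preimage_basicOpen' I.subschemeι g)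
    (I.subschemeι.preimage_mono (Y.basicOpen_le g))
    (by rw [res_pull I.subschemeι (Y.basicOpen_le g), hn, map_mul, map_sub, hb, sub_self, mul_zero])
  refine ⟨p + q, fun N hN => ⟨g ^ (N - p) * n, ?_, ?_⟩⟩
  · obtain ⟨r, rfl⟩ : ∃ r, N = p + q + r := ⟨N - (p + q), by omega⟩
    rw [show p + q + r - p = r + q by omega, pow_add, map_mul, map_mul, mul_assoc,
      map_pow _ _ q, hq, mul_zero]
  · rw [map_mul, hn, ← mul_assoc, map_pow, ← pow_add, Nat.sub_add_cancel (by omega)]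

theorem surjective_pull_top_of_mul_self [IsNoetherian Y] (hI : I * I = ⊥)
    [IsAffine I.subscheme] : Function.Surjective (gpull I.subschemeι) := by
  classical
  have := surjective_subschemeι_of_mul_self I hI
  intro β
  obtain ⟨s, V, hs, hV⟩ := exists_finset_basicOpen_le_preimage I.subschemeι
  have hcover := iSup_eq_top_of_basicOpen_le_preimage I.subschemeι hs hV
  -- lifts of global functions to the opens of the cover
  choose lift hlift using fun (i : s) (c : Γ(I.subscheme, ⊤)) =>
    pull_subschemeι_surjective I (V i) (res le_top c)
  have hlift' (i : s) (c : Γ(I.subscheme, ⊤)) {W : Y.Opens} (h : W ≤ (V i).1) :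
      pull I.subschemeι W (res h (lift i c)) = res le_top c := by
    rw [← res_pull, hlift, res_res]
  have hD (i k : s) : Y.basicOpen (lift i k.1) ≤ (V k).1 := by
    intro y hy
    obtain ⟨z, rfl⟩ := I.subschemeι.surjective y
    have hz : z ∈ I.subschemeι ⁻¹ᵁ Y.basicOpen (lift i k.1) := hy
    rw [preimage_basicOpen', hlift, basicOpen_res'] at hz
    exact hV k hz.2
  choose N₀ hN₀ using fun i k : s => exists_extend_sub I (V i) (V k) (lift i β) (lift k β)
    (lift i k.1) (hD i k) (by rw [hlift', hlift'])
  let N := ∑ i, ∑ k, N₀ i k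
  have hN (i k : s) : N₀ i k ≤ N :=
    (Finset.single_le_sum (f := fun k => N₀ i k) (fun _ _ => Nat.zero_le _)
      (Finset.mem_univ k)).trans
    (Finset.single_le_sum (f := fun i => ∑ k, N₀ i k) (fun _ _ => Nat.zero_le _)
      (Finset.mem_univ i))
  choose n hn0 hn using fun i k : s => hN₀ i k N (hN i k)
  have hM₀ (i j k : s) : ∃ M : ℕ, res (inf_le_left : (V i).1 ⊓ (V j).1 ≤ _) (lift i k.1) ^ M *
      (res inf_le_left (n i k) - res inf_le_right (n j k) -
        res inf_le_left (lift i k.1) ^ N * (res inf_le_left (lift i β) -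
          res inf_le_right (lift j β))) = 0 := by
    let W := (V i).1 ⊓ (V j).1 ⊓ Y.basicOpen (lift i k.1)
    have hWj : W ≤ Y.basicOpen (lift j k.1) := by
      intro y hy
      obtain ⟨z, rfl⟩ := I.subschemeι.surjective y
      have hz : z ∈ I.subschemeι ⁻¹ᵁ Y.basicOpen (lift i k.1) := hy.2
      suffices z ∈ I.subschemeι ⁻¹ᵁ Y.basicOpen (lift j k.1) from this
      rw [preimage_basicOpen', hlift, basicOpen_res'] at hz ⊢
      exact ⟨hy.1.2, hz.2⟩
    have hWi : W ≤ Y.basicOpen (lift i k.1) := inf_le_right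
    refine exists_pow_mul_eq_zero (TopologicalSpace.NoetherianSpace.isCompact _) _ _ (W := W)
      (basicOpen_res' _ _).symm inf_le_left ?_
    have h1 := congr_arg (res hWi) (hn i k)
    have h2 := congr_arg (res hWj) (hn j k)
    simp only [map_sub, map_mul, map_pow, res_res] at h1 h2 ⊢
    rw [h1, h2]
    have hWi' : W ≤ (V i).1 := inf_le_left.trans inf_le_left
    have hWj' : W ≤ (V j).1 := inf_le_left.trans inf_le_right
    have hWk' : W ≤ (V k).1 := hWi.trans (hD i k)
    have h3 : (res hWi' (lift i k.1) ^ N - res hWj' (lift j k.1) ^ N) *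
        (res hWj' (lift j β) - res hWk' (lift k β)) = 0 := by
      apply mul_eq_zero_of_pull_subschemeι I hI
      · rw [map_sub, map_pow, map_pow, hlift', hlift', sub_self]
      · rw [map_sub, hlift', hlift', sub_self]
    linear_combination h3
  choose M₀ hM₀ using hM₀
  let M := ∑ i, ∑ j, ∑ k, M₀ i j k
  have hM (i j k : s) : M₀ i j k ≤ M :=
    (Finset.single_le_sum (f := fun k => M₀ i j k) (fun _ _ => Nat.zero_le _)
      (Finset.mem_univ k)).trans <|
    (Finset.single_le_sum (f := fun j => ∑ k, M₀ i j k) (fun _ _ => Nat.zero_le _)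
      (Finset.mem_univ j)).trans
    (Finset.single_le_sum (f := fun i => ∑ j, ∑ k, M₀ i j k) (fun _ _ => Nat.zero_le _)
      (Finset.mem_univ i))
  have hM' (i j k : s) : res (inf_le_left : (V i).1 ⊓ (V j).1 ≤ _) (lift i k.1) ^ M *
      (res inf_le_left (n i k) - res inf_le_right (n j k) -
        res inf_le_left (lift i k.1) ^ N * (res inf_le_left (lift i β) -
          res inf_le_right (lift j β))) = 0 := by
    rw [← Nat.sub_add_cancel (hM i j k), pow_add, mul_assoc, hM₀, mul_zero]
  obtain ⟨e, he⟩ := exists_sum_mul_pow_eq_one hs (N + M)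
  obtain ⟨f, hf⟩ := exists_glue (fun i => (V i).1) hcover
    (fun i => lift i β - ∑ k : s, lift i (e k) * lift i k.1 ^ M * n i k) (by
      intro i j
      simp only [map_sub, map_sum, map_mul, map_pow]
      have hl {W : Y.Opens} (h : W ≤ (V i).1) (h' : W ≤ (V j).1) (c) :
          pull I.subschemeι W (res h (lift i c)) = pull I.subschemeι W (res h' (lift j c)) := by
        rw [hlift', hlift']
      have h1 : (1 - ∑ k : s, res (inf_le_left : (V i).1 ⊓ (V j).1 ≤ _) (lift i (e k)) *
          res inf_le_left (lift i k.1) ^ (N + M)) *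
          (res inf_le_left (lift i β) - res inf_le_right (lift j β)) = 0 := by
        apply mul_eq_zero_of_pull_subschemeι I hI
        · have := congr_arg (res (le_top : I.subschemeι ⁻¹ᵁ ((V i).1 ⊓ (V j).1) ≤ ⊤)) he
          simp only [map_sum, map_mul, map_pow, map_one, map_sub, hlift'] at this ⊢
          rw [this, sub_self]
        · rw [map_sub, hlift', hlift', sub_self]
      have h2 (k : s) : res (inf_le_right : (V i).1 ⊓ (V j).1 ≤ _) (lift j (e k)) *
          res inf_le_right (lift j k.1) ^ M * res inf_le_right (n j k) =
          res (inf_le_left : (V i).1 ⊓ (V j).1 ≤ _) (lift i (e k)) *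
          res inf_le_left (lift i k.1) ^ M * res inf_le_right (n j k) := by
        rw [← sub_eq_zero, ← sub_mul]
        apply mul_eq_zero_of_pull_subschemeι I hI
        · simp only [map_sub, map_mul, map_pow, hlift', sub_self]
        · rw [← res_pull, hn0, map_zero]
      simp only [h2]
      rw [← sub_eq_zero]
      rw [sub_mul, one_mul, Finset.sum_mul] at h1
      rw [← h1]
      rw [sub_sub_sub_comm, ← Finset.sum_sub_distrib]
      congr 1
      refine Finset.sum_congr rfl fun k _ => ?_
      have h3 := hM' i j k
      rw [pow_add]
      linear_combination res (inf_le_left : (V i).1 ⊓ (V j).1 ≤ _) (lift i (e k)) * h3)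
  refine ⟨f, section_ext_of_cover (fun i => I.subschemeι ⁻¹ᵁ (V i).1)
    (fun i => le_top) ?_ fun i => ?_⟩
  · rw [← I.subschemeι.preimage_iSup, hcover]; exact le_rfl
  · refine (res_gpull I.subschemeι _ f).trans ?_
    rw [hf, map_sub, hlift, sub_eq_self, map_sum]
    refine Finset.sum_eq_zero fun k _ => ?_
    rw [map_mul, hn0, mul_zero]

/-- A noetherian scheme is affine if a closed subscheme defined by a square-zero ideal is. -/
theorem isAffine_of_mul_self_eq_bot [IsNoetherian Y] (hI : I * I = ⊥) [IsAffine I.subscheme] :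
    IsAffine Y := by
  have := surjective_subschemeι_of_mul_self I hI
  have hsurj := surjective_pull_top_of_mul_self I hI
  refine isAffine_of_isAffineOpen_basicOpen { s | IsAffineOpen (Y.basicOpen s) } ?_ fun s hs => hs
  set S : Set Γ(Y, ⊤) := { s | IsAffineOpen (Y.basicOpen s) }
  have hmap : (Ideal.span S).map (gpull I.subschemeι) = ⊤ := by
    rw [Ideal.map_span]
    refine span_eq_top_of_forall_mem_basicOpen _ fun z => ?_
    obtain ⟨V, hV, -⟩ := exists_mem_affineOpens (I.subschemeι z) ⊤ trivial
    obtain ⟨c, hc, hzc⟩ := (isAffineOpen_top _).exists_basicOpen_le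
      (V := I.subschemeι ⁻¹ᵁ V.1) ⟨z, hV⟩ trivial
    obtain ⟨s, rfl⟩ := hsurj c
    refine ⟨_, ⟨s, isAffineOpen_basicOpen_of_le V.2 s fun y hy => ?_, rfl⟩, hzc⟩
    obtain ⟨z', rfl⟩ := I.subschemeι.surjective y
    exact hc ((preimage_basicOpen_gpull I.subschemeι s).le hy)
  have h1 : (1 : Γ(I.subscheme, ⊤)) ∈ (Ideal.span S).map (gpull I.subschemeι) := hmap ▸ trivial
  obtain ⟨t, ht, ht1⟩ := (Ideal.mem_map_iff_of_surjective _ hsurj).mp h1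
  have h2 : (1 - t) * (1 - t) = 0 := by
    apply mul_eq_zero_of_pull_subschemeι I hI <;>
    · rw [map_sub, map_one]; exact sub_eq_zero.mpr ht1.symm
  rw [Ideal.eq_top_iff_one, show (1 : Γ(Y, ⊤)) = (2 - t) * t by linear_combination h2]
  exact Ideal.mul_mem_left _ _ ht

theorem exists_mul_self_eq_bot [IsNoetherian Y] (hY : ¬ IsReduced Y) :
    ∃ I : Y.IdealSheafData, I ≠ ⊥ ∧ I * I = ⊥ := by
  have hN : Y.nilradical ≠ ⊥ := by
    intro h
    refine hY ⟨fun W => ⟨fun x hx => section_ext_of_affineOpens fun U hU => ?_⟩⟩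
    have : res hU x ∈ Y.nilradical.ideal U := (hx.map (res hU))
    rw [h] at this
    simpa using this
  have hpow : ∃ n, Y.nilradical ^ n = ⊥ := by
    obtain ⟨s, hs⟩ := exists_finite_affineOpens_cover Y
    choose n hn using fun U : s => by
      have : IsNoetherianRing Γ(Y, U.1) := IsLocallyNoetherian.component_noetherian U.1
      exact IsNoetherianRing.isNilpotent_nilradical Γ(Y, U.1)
    refine ⟨∑ U, n U, IdealSheafData.ext_of_iSup_eq_top (fun U : s => U.1) hs fun U => ?_⟩
    have h1 : (Y.nilradical ^ (∑ U, n U)).ideal U.1 ≤ 0 := by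
      rw [IdealSheafData.ideal_pow, ← hn U]
      exact Ideal.pow_le_pow_right
        (Finset.single_le_sum (fun _ _ => Nat.zero_le _) (Finset.mem_univ U))
    simpa using h1
  classical
  have h0 : Nat.find hpow ≠ 0 := fun h => hN <| by
    have := Nat.find_spec hpow
    rw [h, pow_zero] at this
    rw [← le_bot_iff, ← this]
    exact le_top
  have h1 : Nat.find hpow ≠ 1 := fun h => hN <| by
    have := Nat.find_spec hpow
    rwa [h, pow_one] at this
  refine ⟨_, Nat.find_min hpow (Nat.pred_lt h0), ?_⟩
  rw [← pow_add, ← le_bot_iff]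
  refine (pow_le_pow_right_of_le_one' le_top ?_).trans (Nat.find_spec hpow).le
  have := Nat.pred_eq_sub_one (n := Nat.find hpow)
  omega

end SquareZero

/-- A choice, for every generic point `y` of `Y`, of a point of `X` above `y` and of a
`κ(y)`-linear retraction of the extension of residue fields. -/
structure GenericTrace {X Y : Scheme.{u}} (π : X ⟶ Y) where
  /-- The index type, in bijection with the generic points. -/
  T : Type u
  /-- The chosen points of `X`. -/
  pt : T → X
  /-- The retractions of the residue field extensions. -/
  tr : ∀ t, X.residueField (pt t) →+ Y.residueField (π (pt t))
  tr_mul : ∀ t a b, tr t ((π.residueFieldMap (pt t)).hom a * b) = a * tr t b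
  tr_one : ∀ t, tr t 1 = 1
  generic : ∀ t z, z ⤳ π (pt t) → z = π (pt t)
  injective : ∀ t t', π (pt t) = π (pt t') → t = t'
  exists_of_generic : ∀ y, (∀ z, z ⤳ y → z = y) → ∃ t, π (pt t) = y

theorem exists_linear_retraction {K L : Type*} [Field K] [Field L] (φ : K →+* L) :
    ∃ tr : L →+ K, (∀ a b, tr (φ a * b) = a * tr b) ∧ tr 1 = 1 := by
  let := φ.toAlgebra
  obtain ⟨g, hg⟩ := LinearMap.exists_leftInverse_of_injective (Algebra.linearMap K L)
    (LinearMap.ker_eq_bot.mpr φ.injective)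
  refine ⟨g.toAddMonoidHom, fun a b => ?_, ?_⟩
  · have := g.map_smul a b
    rwa [Algebra.smul_def] at this
  · have := LinearMap.congr_fun hg 1
    simpa using this

theorem nonempty_genericTrace {X Y : Scheme.{u}} (π : X ⟶ Y) [Surjective π] :
    Nonempty (GenericTrace π) := by
  choose s hs using π.surjective
  choose tr htr using fun x : X => exists_linear_retraction (π.residueFieldMap x).hom
  refine ⟨{ T := { y : Y // ∀ z, z ⤳ y → z = y }, pt := fun y => s y.1, tr := fun y => tr (s y.1)
            tr_mul := fun y => (htr (s y.1)).1, tr_one := fun y => (htr (s y.1)).2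
            generic := fun y z hz => ?_, injective := fun y y' h => ?_
            exists_of_generic := fun y hy => ⟨⟨y, hy⟩, hs y⟩ }⟩
  · rw [hs] at hz ⊢
    exact y.2 z hz
  · rw [hs, hs] at h
    exact Subtype.ext h

theorem exists_generic_specializes {Y : Scheme.{u}} (y : Y) :
    ∃ z, z ⤳ y ∧ ∀ w, w ⤳ z → w = z := by
  obtain ⟨z, hz⟩ := QuasiSober.sober (_root_.isIrreducible_irreducibleComponent (x := y))
    isClosed_irreducibleComponent
  refine ⟨z, ?_, fun w hw => ?_⟩
  · rw [specializes_iff_mem_closure, hz.def]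
    exact mem_irreducibleComponent
  · have h1 : _root_.irreducibleComponent y ⊆ closure {w} := by
      rw [← hz.def]
      exact closure_minimal (by simpa using specializes_iff_mem_closure.mp hw) isClosed_closure
    have := eq_irreducibleComponent isPreirreducible_singleton.closure h1
    exact (show IsGenericPoint w _ from this).eq hz

namespace GenericTrace

variable {X Y : Scheme.{u}} {π : X ⟶ Y} (τ : GenericTrace π)

/-- Families of values at the generic points of `Y`. -/
abbrev Val : Type u := ∀ t, Y.residueField (π (τ.pt t))

open Classical in
/-- The values of a section at the generic points. -/
noncomputable def val (U : Y.Opens) (s : Γ(Y, U)) : τ.Val := fun t =>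
  if h : π (τ.pt t) ∈ U then Y.evaluation U _ h s else 0

open Classical in
/-- The traces of a section on a preimage at the generic points. -/
noncomputable def trace (U : Y.Opens) (s : Γ(X, π ⁻¹ᵁ U)) : τ.Val := fun t =>
  if h : π (τ.pt t) ∈ U then τ.tr t (X.evaluation (π ⁻¹ᵁ U) (τ.pt t) h s) else 0

/-- The traces of a global section at the generic points. -/
noncomputable def gtrace (s : Γ(X, ⊤)) : τ.Val := fun t =>
  τ.tr t (X.evaluation ⊤ (τ.pt t) trivial s)

variable {U V W : Y.Opens}

theorem val_of_mem {t} (h : π (τ.pt t) ∈ U) (s : Γ(Y, U)) :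
    τ.val U s t = Y.evaluation U _ h s := dif_pos h

theorem val_of_notMem {t} (h : π (τ.pt t) ∉ U) (s : Γ(Y, U)) : τ.val U s t = 0 := dif_neg h

theorem trace_of_mem {t} (h : π (τ.pt t) ∈ U) (s : Γ(X, π ⁻¹ᵁ U)) :
    τ.trace U s t = τ.tr t (X.evaluation (π ⁻¹ᵁ U) (τ.pt t) h s) := dif_pos h

theorem val_add (r s : Γ(Y, U)) : τ.val U (r + s) = τ.val U r + τ.val U s := by
  ext t
  by_cases h : π (τ.pt t) ∈ U <;> simp [val, h]

theorem val_mul (r s : Γ(Y, U)) : τ.val U (r * s) = τ.val U r * τ.val U s := by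
  ext t
  by_cases h : π (τ.pt t) ∈ U <;> simp [val, h]

theorem val_zero : τ.val U 0 = 0 := by
  ext t
  by_cases h : π (τ.pt t) ∈ U <;> simp [val, h]

theorem val_sub (r s : Γ(Y, U)) : τ.val U (r - s) = τ.val U r - τ.val U s := by
  ext t
  by_cases h : π (τ.pt t) ∈ U <;> simp [val, h]

theorem val_sum {ι : Type*} (A : Finset ι) (r : ι → Γ(Y, U)) :
    τ.val U (∑ i ∈ A, r i) = ∑ i ∈ A, τ.val U (r i) :=
  map_sum (⟨⟨τ.val U, τ.val_zero⟩, τ.val_add⟩ : Γ(Y, U) →+ τ.Val) r A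

theorem val_one {t} (h : π (τ.pt t) ∈ U) : τ.val U 1 t = 1 := by
  rw [val_of_mem τ h, map_one]

theorem val_pow {t} (h : π (τ.pt t) ∈ U) (s : Γ(Y, U)) (n : ℕ) :
    τ.val U (s ^ n) t = τ.val U s t ^ n := by
  rw [val_of_mem τ h, val_of_mem τ h, map_pow]

theorem trace_add (r s : Γ(X, π ⁻¹ᵁ U)) : τ.trace U (r + s) = τ.trace U r + τ.trace U s := by
  ext t
  by_cases h : π (τ.pt t) ∈ U <;> simp [trace, h]

theorem trace_zero : τ.trace U 0 = 0 := by
  ext t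
  by_cases h : π (τ.pt t) ∈ U <;> simp [trace, h]

theorem trace_sum {ι : Type*} (A : Finset ι) (r : ι → Γ(X, π ⁻¹ᵁ U)) :
    τ.trace U (∑ i ∈ A, r i) = ∑ i ∈ A, τ.trace U (r i) :=
  map_sum (⟨⟨τ.trace U, τ.trace_zero⟩, τ.trace_add⟩ : Γ(X, π ⁻¹ᵁ U) →+ τ.Val) r A

theorem trace_pull_mul (r : Γ(Y, U)) (s : Γ(X, π ⁻¹ᵁ U)) :
    τ.trace U (pull π U r * s) = τ.val U r * τ.trace U s := by
  ext t
  by_cases h : π (τ.pt t) ∈ U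
  · simp only [Pi.mul_apply]
    rw [trace_of_mem τ h, trace_of_mem τ h, val_of_mem τ h, ← τ.tr_mul, map_mul]
    congr 2
    exact (evaluation_naturality_apply π (τ.pt t) h r).symm
  · simp [trace, h]

theorem evaluation_res {Z : Scheme.{u}} {U V : Z.Opens} (h : U ≤ V) (s : Γ(Z, V)) (z : Z)
    (hz : z ∈ U) : Z.evaluation U z hz (res h s) = Z.evaluation V z (h hz) s := by
  simp only [evaluation, res, CommRingCat.comp_apply]
  congr 1
  exact Z.presheaf.germ_res_apply _ _ _ _

theorem val_res (h : U ≤ V) (s : Γ(Y, V)) {t} (ht : π (τ.pt t) ∈ U) :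
    τ.val U (res h s) t = τ.val V s t := by
  rw [val_of_mem τ ht, val_of_mem τ (h ht), evaluation_res]

theorem trace_res (h : U ≤ V) (s : Γ(X, π ⁻¹ᵁ V)) {t} (ht : π (τ.pt t) ∈ U) :
    τ.trace U (res (π.preimage_mono h) s) t = τ.trace V s t := by
  rw [trace_of_mem τ ht, trace_of_mem τ (h ht)]
  exact congr_arg _ (evaluation_res _ s _ _)

theorem trace_res_top (s : Γ(X, ⊤)) {t} (ht : π (τ.pt t) ∈ U) :
    τ.trace U (res le_top s) t = τ.gtrace s t := by
  rw [trace_of_mem τ ht, gtrace]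
  exact congr_arg _ (evaluation_res _ s _ _)

theorem gtrace_one : τ.gtrace 1 = 1 := by
  ext t
  simp [gtrace, τ.tr_one]

theorem gtrace_sum {ι : Type*} (A : Finset ι) (r : ι → Γ(X, ⊤)) :
    τ.gtrace (∑ i ∈ A, r i) = ∑ i ∈ A, τ.gtrace (r i) := by
  ext t
  simp [gtrace]

theorem gtrace_gpull_mul (r : Γ(Y, ⊤)) (s : Γ(X, ⊤)) :
    τ.gtrace (gpull π r * s) = τ.val ⊤ r * τ.gtrace s := by
  ext t
  simp only [Pi.mul_apply]
  rw [gtrace, gtrace, val_of_mem τ (TopologicalSpace.Opens.mem_top _), ← τ.tr_mul, map_mul]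
  congr 2
  exact (Γevaluation_naturality_apply π (τ.pt t) r).symm

theorem val_ne_zero_iff {t} (h : π (τ.pt t) ∈ U) (s : Γ(Y, U)) :
    τ.val U s t ≠ 0 ↔ π (τ.pt t) ∈ Y.basicOpen s := by
  rw [val_of_mem τ h, evaluation_ne_zero_iff_mem_basicOpen]

/-- On a reduced scheme sections are determined by their values at generic points. -/
theorem eq_zero_of_val [IsReduced Y] (s : Γ(Y, U)) (h : ∀ t, π (τ.pt t) ∈ U → τ.val U s t = 0) :
    s = 0 := by
  rw [← basicOpen_eq_bot_iff, eq_bot_iff]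
  intro y hy
  obtain ⟨z, hzy, hz⟩ := exists_generic_specializes y
  obtain ⟨t, rfl⟩ := τ.exists_of_generic z hz
  have hzs := hzy.mem_open (Y.basicOpen s).isOpen hy
  exact absurd (h t (Y.basicOpen_le s hzs)) ((τ.val_ne_zero_iff (Y.basicOpen_le s hzs) s).mpr hzs)

theorem eq_of_val [IsReduced Y] (r s : Γ(Y, U))
    (h : ∀ t, π (τ.pt t) ∈ U → τ.val U r t = τ.val U s t) : r = s :=
  sub_eq_zero.mp <| τ.eq_zero_of_val _ fun t ht => by
    rw [val_sub, Pi.sub_apply, h t ht, sub_self]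

theorem exists_glue_of_val [IsReduced Y] {ι : Type*} (U : ι → Y.Opens) (hU : ⨆ i, U i = ⊤)
    (v : τ.Val) (s : ∀ i, Γ(Y, U i)) (h : ∀ i t, π (τ.pt t) ∈ U i → τ.val (U i) (s i) t = v t) :
    ∃ r : Γ(Y, ⊤), ∀ i, res le_top r = s i :=
  exists_glue U hU s fun i j => τ.eq_of_val _ _ fun t ht => by
    rw [val_res τ _ _ ht, val_res τ _ _ ht, h i t ht.1, h j t ht.2]

end GenericTrace

theorem res_mem_ideal {Y : Scheme.{u}} (I : Y.IdealSheafData) {U V : Y.affineOpens} (h : U.1 ≤ V.1)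
    {r : Γ(Y, V.1)} (hr : r ∈ I.ideal V) : res h r ∈ I.ideal U := by
  rw [← I.map_ideal (show U ≤ V from h)]
  exact Ideal.mem_map_of_mem _ hr

theorem exists_mem_res_eq_of_mem_map {Y : Scheme.{u}} {U W : Y.Opens} (hU : IsAffineOpen U)
    (J : Ideal Γ(Y, U)) (f : Γ(Y, U)) (hW : W = Y.basicOpen f) (hWU : W ≤ U) {r : Γ(Y, W)}
    (hr : r ∈ J.map (res hWU)) :
    ∃ (n : ℕ) (r' : Γ(Y, U)), r' ∈ J ∧ res hWU r' = res hWU f ^ n * r := by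
  refine Submodule.span_induction ?_ ?_ ?_ ?_ hr
  · rintro _ ⟨x, hx, rfl⟩
    exact ⟨0, x, hx, by simp⟩
  · exact ⟨0, 0, zero_mem _, by simp⟩
  · rintro x y - - ⟨n, x', hx', hx⟩ ⟨m, y', hy', hy⟩
    refine ⟨n + m, f ^ m * x' + f ^ n * y', add_mem (Ideal.mul_mem_left _ _ hx')
      (Ideal.mul_mem_left _ _ hy'), ?_⟩
    rw [map_add, map_mul, map_mul, hx, hy, map_pow, map_pow]
    ring
  · rintro c x - ⟨n, x', hx', hx⟩
    obtain ⟨m, c', hc⟩ := exists_res_eq_pow_mul hU f hW hWU c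
    refine ⟨n + m, c' * x', Ideal.mul_mem_left _ _ hx', ?_⟩
    rw [map_mul, hx, hc, smul_eq_mul]
    ring

theorem exists_mem_ideal_res_eq {Y : Scheme.{u}} (I : Y.IdealSheafData) {U W : Y.affineOpens}
    (f : Γ(Y, U.1)) (hW : W.1 = Y.basicOpen f) (hWU : W.1 ≤ U.1) {r : Γ(Y, W.1)}
    (hr : r ∈ I.ideal W) : ∃ (n : ℕ) (r' : Γ(Y, U.1)), r' ∈ I.ideal U ∧
      res hWU r' = res hWU f ^ n * r := by
  rw [← I.map_ideal (show W ≤ U from hWU)] at hr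
  exact exists_mem_res_eq_of_mem_map U.2 _ f hW hWU hr

theorem isUnit_res_of_eq_basicOpen {Y : Scheme.{u}} {U W : Y.Opens} (f : Γ(Y, U))
    (hW : W = Y.basicOpen f) (hWU : W ≤ U) : IsUnit (res hWU f) := by
  subst hW
  exact RingedSpace.isUnit_res_basicOpen Y.toRingedSpace f

theorem exists_finset_eq_sum_pull_mul {X Y : Scheme.{u}} (π : X ⟶ Y) [IsFinite π]
    (U : Y.affineOpens) : ∃ G : Finset Γ(X, π ⁻¹ᵁ U.1), ∀ s, ∃ c : Γ(X, π ⁻¹ᵁ U.1) → Γ(Y, U.1),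
      s = ∑ g ∈ G, pull π U.1 (c g) * g := by
  have h := IsFinite.finite_app π U.1 U.2
  let := (π.app U.1).hom.toAlgebra
  have : Module.Finite Γ(Y, U.1) Γ(X, π ⁻¹ᵁ U.1) := h
  obtain ⟨G, hG⟩ := this
  refine ⟨G, fun s => ?_⟩
  have hs : s ∈ Submodule.span Γ(Y, U.1) (G : Set Γ(X, π ⁻¹ᵁ U.1)) := hG ▸ trivial
  obtain ⟨c, -, hc⟩ := Submodule.mem_span_finset.mp hs
  exact ⟨c, hc.symm⟩

namespace GenericTrace

variable {X Y : Scheme.{u}} {π : X ⟶ Y} (τ : GenericTrace π)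

/-- The values `v` are those of a section of `I` over `U`. -/
def IsRep (I : Y.IdealSheafData) (U : Y.affineOpens) (v : τ.Val) : Prop :=
  ∃ r ∈ I.ideal U, ∀ t, π (τ.pt t) ∈ U.1 → τ.val U.1 r t = v t

variable {τ} {I : Y.IdealSheafData} {U V W : Y.affineOpens} {v w : τ.Val}

theorem IsRep.congr (h : τ.IsRep I U v) (hvw : ∀ t, π (τ.pt t) ∈ U.1 → v t = w t) :
    τ.IsRep I U w := by
  obtain ⟨r, hr, hv⟩ := h
  exact ⟨r, hr, fun t ht => (hv t ht).trans (hvw t ht)⟩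

theorem IsRep.add (hv : τ.IsRep I U v) (hw : τ.IsRep I U w) : τ.IsRep I U (v + w) := by
  obtain ⟨r, hr, hv⟩ := hv
  obtain ⟨s, hs, hw⟩ := hw
  exact ⟨r + s, add_mem hr hs, fun t ht => by
    rw [val_add, Pi.add_apply, Pi.add_apply, hv t ht, hw t ht]⟩

theorem IsRep.zero : τ.IsRep I U 0 := ⟨0, zero_mem _, fun t _ => by rw [val_zero]⟩

theorem IsRep.sum {ι : Type*} (A : Finset ι) {v : ι → τ.Val} (h : ∀ i ∈ A, τ.IsRep I U (v i)) :
    τ.IsRep I U (∑ i ∈ A, v i) := by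
  classical
  induction A using Finset.induction_on with
  | empty => exact IsRep.zero
  | insert a A ha ih =>
    rw [Finset.sum_insert ha]
    exact (h a (Finset.mem_insert_self a A)).add
      (ih fun i hi => h i (Finset.mem_insert_of_mem hi))

theorem IsRep.val_mul (c : Γ(Y, U.1)) (h : τ.IsRep I U v) : τ.IsRep I U (τ.val U.1 c * v) := by
  obtain ⟨r, hr, hv⟩ := h
  exact ⟨c * r, Ideal.mul_mem_left _ _ hr, fun t ht => by
    rw [GenericTrace.val_mul, Pi.mul_apply, Pi.mul_apply, hv t ht]⟩

theorem IsRep.res (h : U.1 ≤ V.1) (hv : τ.IsRep I V v) : τ.IsRep I U v := by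
  obtain ⟨r, hr, hv⟩ := hv
  exact ⟨Scheme.res h r, res_mem_ideal I h hr, fun t ht => by rw [val_res τ h r ht, hv t (h ht)]⟩

/-- Values represented on the basic open of `f` are represented on `U` after multiplication by
a high power of `f`. -/
theorem IsRep.exists_pow {f : Γ(Y, U.1)} (hW : W.1 = Y.basicOpen f) (h : τ.IsRep I W v) :
    ∃ N : ℕ, ∀ n ≥ N, ∀ w : τ.Val, (∀ t, π (τ.pt t) ∈ W.1 → w t = v t) →
      τ.IsRep I U (τ.val U.1 (f ^ n) * w) := by
  have hWU : W.1 ≤ U.1 := hW ▸ Y.basicOpen_le f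
  obtain ⟨r, hr, hv⟩ := h
  obtain ⟨k, r', hr', hres⟩ := exists_mem_ideal_res_eq I f hW hWU hr
  refine ⟨k + 1, fun n hn w hw => ?_⟩
  obtain ⟨m, rfl⟩ : ∃ m, n = m + 1 + k := ⟨n - (k + 1), by omega⟩
  refine ⟨f ^ (m + 1) * r', Ideal.mul_mem_left _ _ hr', fun t ht => ?_⟩
  by_cases htW : π (τ.pt t) ∈ W.1
  · have h1 : τ.val U.1 r' t = τ.val U.1 f t ^ k * v t := by
      rw [← val_res τ hWU r' htW, hres, GenericTrace.val_mul, Pi.mul_apply, val_pow τ htW,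
        val_res τ hWU f htW, hv t htW]
    rw [GenericTrace.val_mul, Pi.mul_apply, Pi.mul_apply, hw t htW, val_pow τ ht, val_pow τ ht,
      h1, pow_add _ (m + 1), mul_assoc]
  · have h0 : τ.val U.1 f t = 0 := by
      by_contra h0
      exact htW (hW ▸ (val_ne_zero_iff τ ht f).mp h0)
    rw [GenericTrace.val_mul, Pi.mul_apply, Pi.mul_apply, val_pow τ ht, val_pow τ ht, h0]
    simp

variable (τ)

/-- The functions `h` such that `h * w * tr s` is represented by a section of `I` for all `s`. -/
def colonIdeal (I : Y.IdealSheafData) (U : Y.affineOpens) (w : τ.Val) : Ideal Γ(Y, U.1) where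
  carrier := { h | ∀ s, τ.IsRep I U (τ.val U.1 h * w * τ.trace U.1 s) }
  add_mem' {a b} ha hb s := by
    rw [val_add, add_mul, add_mul]
    exact (ha s).add (hb s)
  zero_mem' s := by
    rw [val_zero, zero_mul, zero_mul]
    exact IsRep.zero
  smul_mem' c a ha s := by
    rw [smul_eq_mul, GenericTrace.val_mul, mul_assoc, mul_assoc, ← mul_assoc (τ.val U.1 a)]
    exact (ha s).val_mul c

theorem exists_pow_mem_colonIdeal [IsFinite π] {f : Γ(Y, U.1)} (hW : W.1 = Y.basicOpen f)
    (h : ∀ s, τ.IsRep I W (w * τ.trace W.1 s)) : ∃ N : ℕ, f ^ N ∈ τ.colonIdeal I U w := by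
  have hWU : W.1 ≤ U.1 := hW ▸ Y.basicOpen_le f
  obtain ⟨G, hG⟩ := exists_finset_eq_sum_pull_mul π U
  choose N hN using fun g : Γ(X, π ⁻¹ᵁ U.1) =>
    (h (Scheme.res (π.preimage_mono hWU) g)).exists_pow hW
  refine ⟨∑ g ∈ G, N g, fun s => ?_⟩
  obtain ⟨c, rfl⟩ := hG s
  rw [trace_sum, Finset.mul_sum]
  refine IsRep.sum G fun g hg => ?_
  rw [trace_pull_mul, mul_left_comm, mul_assoc]
  refine IsRep.val_mul _ (hN g _ (Finset.single_le_sum (f := N) (by simp) hg) _ fun t ht => ?_)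
  rw [Pi.mul_apply, Pi.mul_apply, trace_res τ hWU g ht]

theorem res_mem_colonIdeal [IsFinite π] {f : Γ(Y, U.1)} (hW : W.1 = Y.basicOpen f)
    (hWU : W.1 ≤ U.1) {d : Γ(Y, U.1)} (hd : d ∈ τ.colonIdeal I U w) :
    Scheme.res hWU d ∈ τ.colonIdeal I W w := by
  intro s
  have hpre : π ⁻¹ᵁ W.1 = X.basicOpen (pull π U.1 f) := by rw [hW, preimage_basicOpen']
  obtain ⟨n, y, hy⟩ := exists_res_eq_pow_mul (U.2.preimage π) (pull π U.1 f) hpre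
    (π.preimage_mono hWU) s
  obtain ⟨u, hu⟩ := (isUnit_res_of_eq_basicOpen f hW hWU).exists_left_inv
  refine (((hd y).res hWU).val_mul (u ^ n)).congr fun t ht => ?_
  have h1 : τ.val U.1 f t ^ n * τ.trace W.1 s t = τ.trace U.1 y t := by
    rw [← trace_res τ hWU y ht, hy, res_pull π hWU, ← map_pow, trace_pull_mul, Pi.mul_apply,
      val_pow τ ht, val_res τ hWU f ht]
  have h2 : τ.val W.1 (u ^ n) t * τ.val U.1 f t ^ n = 1 := by
    rw [← val_res τ hWU f ht, ← val_pow τ ht, ← Pi.mul_apply, ← GenericTrace.val_mul, ← mul_pow,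
      hu, one_pow, val_one τ ht]
  simp only [Pi.mul_apply]
  rw [← h1, val_res τ hWU d ht]
  linear_combination (τ.val U.1 d t * w t * τ.trace W.1 s t) * h2

theorem exists_eq_mul_res_of_mem_colonIdeal [IsFinite π] {f : Γ(Y, U.1)}
    (hW : W.1 = Y.basicOpen f) (hWU : W.1 ≤ U.1) {d : Γ(Y, W.1)}
    (hd : d ∈ τ.colonIdeal ⊤ W 1) : ∃ c, ∃ d' ∈ τ.colonIdeal ⊤ U 1, d = c * Scheme.res hWU d' := by
  obtain ⟨N, hN⟩ := τ.exists_pow_mem_colonIdeal (U := U) (I := ⊤) (w := τ.val W.1 d) hW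
    fun s => (hd s).congr fun t _ => by rw [mul_one]
  obtain ⟨n, y, hy⟩ := exists_res_eq_pow_mul U.2 f hW hWU d
  obtain ⟨u, hu⟩ := (isUnit_res_of_eq_basicOpen f hW hWU).exists_left_inv
  refine ⟨u ^ (N + 1 + n), f ^ (N + 1) * y, fun s => ?_, ?_⟩
  · refine ((hN s).val_mul (f ^ (n + 1))).congr fun t ht => ?_
    simp only [GenericTrace.val_mul, Pi.mul_apply, Pi.one_apply]
    simp only [val_pow τ ht]
    by_cases htW : π (τ.pt t) ∈ W.1
    · have h1 : τ.val U.1 y t = τ.val U.1 f t ^ n * τ.val W.1 d t := by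
        rw [← val_res τ hWU y htW, hy, GenericTrace.val_mul, Pi.mul_apply, val_pow τ htW,
          val_res τ hWU f htW]
      rw [h1]
      ring
    · have h0 : τ.val U.1 f t = 0 := by
        by_contra h0
        exact htW (hW ▸ (val_ne_zero_iff τ ht f).mp h0)
      rw [h0]
      simp
  · rw [map_mul, map_pow, hy, ← mul_assoc _ _ d, ← pow_add, ← mul_assoc, ← mul_pow, hu,
      one_pow, one_mul]

/-- The ideal sheaf of functions `d` such that `d * tr s` is regular for all `s`. -/
noncomputable def conductor [IsFinite π] : Y.IdealSheafData where
  ideal U := τ.colonIdeal ⊤ U 1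
  map_ideal_basicOpen U f := by
    have hWU : (Y.affineBasicOpen f).1 ≤ U.1 := Y.basicOpen_le f
    have hW : (Y.affineBasicOpen f).1 = Y.basicOpen f := rfl
    refine le_antisymm (Ideal.map_le_iff_le_comap.mpr fun d hd => τ.res_mem_colonIdeal hW hWU hd)
      fun d hd => ?_
    obtain ⟨c, d', hd', rfl⟩ := τ.exists_eq_mul_res_of_mem_colonIdeal hW hWU hd
    exact Ideal.mul_mem_left _ _ (Ideal.mem_map_of_mem _ hd')

theorem isRep_of_mem_conductor [IsFinite π] {d : Γ(Y, U.1)} (hd : d ∈ τ.conductor.ideal U)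
    (s : Γ(X, π ⁻¹ᵁ U.1)) : τ.IsRep ⊤ U (τ.val U.1 d * τ.trace U.1 s) :=
  (hd s).congr fun t _ => by rw [mul_one]

theorem isRep_of_mem_conductor_mul [IsFinite π] {m : Γ(Y, U.1)}
    (hm : m ∈ (τ.conductor * I).ideal U) (s : Γ(X, π ⁻¹ᵁ U.1)) :
    τ.IsRep I U (τ.val U.1 m * τ.trace U.1 s) := by
  rw [IdealSheafData.ideal_mul] at hm
  refine Submodule.mul_induction_on hm (fun d hd i hi => ?_) fun x y hx hy => ?_
  · obtain ⟨r, -, hr⟩ := τ.isRep_of_mem_conductor hd s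
    refine ⟨i * r, Ideal.mul_mem_right _ _ hi, fun t ht => ?_⟩
    rw [GenericTrace.val_mul, GenericTrace.val_mul, Pi.mul_apply, Pi.mul_apply, Pi.mul_apply,
      hr t ht, Pi.mul_apply]
    ring
  · rw [val_add, add_mul]
    exact hx.add hy

end GenericTrace

theorem exists_pow_mem_of_basicOpen_le {X : Scheme.{u}} {P : X.Opens} (hP : IsAffineOpen P)
    (Q : Ideal Γ(X, P)) (a : Γ(X, P))
    (h : ∀ x ∈ X.basicOpen a, ∃ c ∈ Q, x ∈ X.basicOpen c) : ∃ N : ℕ, a ^ N ∈ Q := by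
  have hle := X.basicOpen_le a
  have htop : Q.map (res hle) = ⊤ := by
    rw [Ideal.map, ← (hP.basicOpen a).self_le_iSup_basicOpen_iff]
    intro x hx
    obtain ⟨c, hc, hxc⟩ := h x hx
    refine TopologicalSpace.Opens.mem_iSup.mpr ⟨⟨res hle c, c, hc, rfl⟩, ?_⟩
    rw [basicOpen_res']
    exact ⟨hx, hxc⟩
  obtain ⟨n, r, hr, hres⟩ := exists_mem_res_eq_of_mem_map (r := 1) hP Q a rfl hle
    (htop ▸ Submodule.mem_top)
  obtain ⟨k, hk⟩ := exists_pow_mul_eq_zero hP.isCompact (r - a ^ n) a rfl hle (by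
    rw [map_sub, hres, map_pow, mul_one, sub_self])
  refine ⟨k + n, ?_⟩
  rw [mul_sub, sub_eq_zero] at hk
  rw [pow_add, ← hk]
  exact Ideal.mul_mem_left _ _ hr

/-- Membership in an ideal sheaf is local. -/
theorem mem_ideal_of_locally {Y : Scheme.{u}} (I : Y.IdealSheafData) (W : Y.affineOpens)
    (r : Γ(Y, W.1)) (h : ∀ y ∈ W.1, ∃ (W' : Y.affineOpens) (hW' : W'.1 ≤ W.1),
      y ∈ W'.1 ∧ res hW' r ∈ I.ideal W') : r ∈ I.ideal W := by
  rw [← pull_subschemeι_eq_zero_iff]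
  choose W' hW' hy hmem using h
  refine section_ext_of_cover (fun y : W.1 => I.subschemeι ⁻¹ᵁ (W' y.1 y.2).1)
    (fun y => I.subschemeι.preimage_mono (hW' y.1 y.2)) (fun z hz => ?_) fun y => ?_
  · exact TopologicalSpace.Opens.mem_iSup.mpr ⟨⟨I.subschemeι z, hz⟩, hy _ hz⟩
  · rw [res_pull I.subschemeι (hW' y.1 y.2), map_zero, pull_subschemeι_eq_zero_iff]
    exact hmem y.1 y.2

theorem res_sub_res_mem_ideal {Y : Scheme.{u}} (J : Y.IdealSheafData) {β : Γ(J.subscheme, ⊤)}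
    {U V W : Y.affineOpens} (hU : W.1 ≤ U.1) (hV : W.1 ≤ V.1) {b : Γ(Y, U.1)} {b' : Γ(Y, V.1)}
    (hb : pull J.subschemeι U.1 b = res le_top β)
    (hb' : pull J.subschemeι V.1 b' = res le_top β) : res hU b - res hV b' ∈ J.ideal W := by
  rw [← pull_subschemeι_eq_zero_iff, map_sub, ← res_pull _ hU, ← res_pull _ hV, hb, hb', res_res,
    res_res, sub_self]

theorem ideal_mul_le_right {Y : Scheme.{u}} (J I : Y.IdealSheafData) (W : Y.affineOpens) :
    (J * I).ideal W ≤ I.ideal W := by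
  rw [IdealSheafData.ideal_mul]
  exact (Ideal.mul_le_right : J.ideal W * I.ideal W ≤ I.ideal W)

namespace GenericTrace

variable {X Y : Scheme.{u}} {π : X ⟶ Y} (τ : GenericTrace π) [IsFinite π]
  {I : Y.IdealSheafData}

theorem exists_mem_colonIdeal_mem_basicOpen {U V : Y.affineOpens} (b : Γ(Y, U.1)) (b' : Γ(Y, V.1))
    (hb : ∀ (W : Y.affineOpens) (hU : W.1 ≤ U.1) (hV : W.1 ≤ V.1),
      res hU b - res hV b' ∈ (τ.conductor * I).ideal W) {y : Y} (hyU : y ∈ U.1) (hyV : y ∈ V.1) :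
    ∃ h ∈ τ.colonIdeal I U (τ.val U.1 b - τ.val V.1 b'), y ∈ Y.basicOpen h := by
  obtain ⟨f, hfV, hyf⟩ := U.2.exists_basicOpen_le (V := V.1) ⟨y, hyV⟩ hyU
  let W : Y.affineOpens := Y.affineBasicOpen f
  have hWU : W.1 ≤ U.1 := Y.basicOpen_le f
  have hWV : W.1 ≤ V.1 := hfV
  obtain ⟨N, hN⟩ := τ.exists_pow_mem_colonIdeal (W := W) (f := f) (I := I)
    (w := τ.val U.1 b - τ.val V.1 b') rfl fun s =>
      (τ.isRep_of_mem_conductor_mul (hb W hWU hWV) s).congr fun t ht => by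
        rw [val_sub, Pi.mul_apply, Pi.mul_apply, Pi.sub_apply, Pi.sub_apply, val_res τ hWU b ht,
          val_res τ hWV b' ht]
  refine ⟨f * f ^ N, Ideal.mul_mem_left _ _ hN, ?_⟩
  rw [← pow_succ', Y.basicOpen_pow f (Nat.succ_pos N)]
  exact hyf

theorem exists_pow_isRep {U V : Y.affineOpens} (b : Γ(Y, U.1)) (b' : Γ(Y, V.1))
    (hb : ∀ (W : Y.affineOpens) (hU : W.1 ≤ U.1) (hV : W.1 ≤ V.1),
      res hU b - res hV b' ∈ (τ.conductor * I).ideal W) (a : Γ(X, ⊤))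
    (ha : X.basicOpen a ≤ π ⁻¹ᵁ V.1) :
    ∃ N : ℕ, ∀ n ≥ N, ∀ x, τ.IsRep I U ((τ.val U.1 b - τ.val V.1 b') * τ.gtrace (a ^ n * x)) := by
  let w : τ.Val := τ.val U.1 b - τ.val V.1 b'
  let Q : Ideal Γ(X, π ⁻¹ᵁ U.1) :=
    { carrier := { c | ∀ s, τ.IsRep I U (w * τ.trace U.1 (c * s)) }
      add_mem' := fun hc hd s => by
        rw [add_mul, trace_add, mul_add]
        exact (hc s).add (hd s)
      zero_mem' := fun s => by
        rw [zero_mul, trace_zero, mul_zero]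
        exact IsRep.zero
      smul_mem' := fun c d hd s => by
        rw [smul_eq_mul, mul_comm c d, mul_assoc]
        exact hd _ }
  have hle : π ⁻¹ᵁ U.1 ≤ ⊤ := le_top
  obtain ⟨N, hN⟩ := exists_pow_mem_of_basicOpen_le (U.2.preimage π) Q (res hle a) fun x hx => by
    rw [basicOpen_res'] at hx
    obtain ⟨h, hh, hxh⟩ := τ.exists_mem_colonIdeal_mem_basicOpen b b' hb hx.1 (ha hx.2)
    refine ⟨pull π U.1 h, fun s => ?_, ?_⟩
    · rw [trace_pull_mul, ← mul_assoc, mul_comm w]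
      exact hh s
    · rw [← preimage_basicOpen']
      exact hxh
  refine ⟨N, fun n hn x => (hN (res hle (a ^ (n - N) * x))).congr fun t ht => ?_⟩
  rw [Pi.mul_apply, Pi.mul_apply, ← map_pow, ← map_mul, ← mul_assoc, ← pow_add,
    Nat.add_sub_cancel' hn, trace_res_top τ _ ht]

/-- Functions on the subscheme of `conductor * I` lift to global functions, modulo `I`. -/
theorem exists_lift [IsAffine X] [Surjective π] [IsReduced Y]
    (β : Γ((τ.conductor * I).subscheme, ⊤)) :
    ∃ f : Γ(Y, ⊤), ∀ (W : Y.affineOpens) (b : Γ(Y, W.1)),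
      pull (τ.conductor * I).subschemeι W.1 b = res le_top β → res le_top f - b ∈ I.ideal W := by
  obtain ⟨s, V, hs, hV⟩ := exists_finset_basicOpen_le_preimage π
  have hcov := iSup_eq_top_of_basicOpen_le_preimage π hs hV
  choose b hb using fun i : s =>
    pull_subschemeι_surjective (τ.conductor * I) (V i) (res le_top β)
  choose N hN using fun i j : s => τ.exists_pow_isRep (b i) (b j)
    (fun W hU hV => res_sub_res_mem_ideal _ hU hV (hb i) (hb j)) j.1 (hV j)
  obtain ⟨e, he⟩ := exists_sum_mul_pow_eq_one hs (∑ i, ∑ j, N i j)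
  have hle (i j : s) : N i j ≤ ∑ i, ∑ j, N i j :=
    (Finset.single_le_sum (f := N i) (by simp) (Finset.mem_univ j)).trans
      (Finset.single_le_sum (f := fun i => ∑ j, N i j) (by simp) (Finset.mem_univ i))
  choose m hmI hm using fun i j => hN i j _ (hle i j) (e j)
  let g (j : s) : τ.Val := τ.gtrace (j.1 ^ (∑ i, ∑ j, N i j) * e j)
  have hg : ∑ j, g j = 1 := by
    rw [← gtrace_one, ← he, gtrace_sum]
    simp only [g, mul_comm]
  obtain ⟨f, hf⟩ := τ.exists_glue_of_val (fun i => (V i).1) hcov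
    (∑ j, τ.val (V j).1 (b j) * g j) (fun i => b i - ∑ j, m i j) fun i t ht => by
      have hgt := congr_fun hg t
      simp only [Finset.sum_apply, Pi.one_apply] at hgt
      rw [val_sub, val_sum, Pi.sub_apply, Finset.sum_apply, Finset.sum_apply]
      simp only [hm _ _ t ht, Pi.mul_apply, Pi.sub_apply, sub_mul, Finset.sum_sub_distrib,
        ← Finset.mul_sum]
      change _ - (_ * ∑ j, g j t - ∑ j, _ * g j t) = _
      rw [hgt]
      ring
  refine ⟨f, fun W c hc => mem_ideal_of_locally I W _ fun y hy => ?_⟩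
  obtain ⟨i, hi⟩ := TopologicalSpace.Opens.mem_iSup.mp (hcov ▸ trivial : y ∈ ⨆ i, (V i).1)
  obtain ⟨W', hyW', hW'⟩ := exists_mem_affineOpens y (W.1 ⊓ (V i).1) ⟨hy, hi⟩
  have h1 := hW'.trans inf_le_left
  have h2 := hW'.trans inf_le_right
  refine ⟨W', h1, hyW', ?_⟩
  have key : res h1 (res le_top f - c) = (res h2 (b i) - res h1 c) - res h2 (∑ j, m i j) := by
    rw [map_sub, res_res, ← res_res h2 le_top, hf, map_sub]
    ring
  rw [key]
  exact sub_mem (ideal_mul_le_right _ _ _ (res_sub_res_mem_ideal _ h2 h1 (hb i) hc))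
    (res_mem_ideal I h2 (sum_mem fun j _ => hmI i j))

end GenericTrace

/-- Elements of the residue field are fractions of sections over an affine open. -/
theorem exists_evaluation_eq_mul {Y : Scheme.{u}} {U : Y.Opens} (hU : IsAffineOpen U) {y : Y}
    (hy : y ∈ U) (v : Y.residueField y) :
    ∃ a c : Γ(Y, U), Y.evaluation U y hy c ≠ 0 ∧
      Y.evaluation U y hy a = Y.evaluation U y hy c * v := by
  obtain ⟨σ, rfl⟩ := IsLocalRing.residue_surjective v
  obtain ⟨W, hyW, σ, rfl⟩ := Y.presheaf.exists_germ_eq σ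
  obtain ⟨c, hcW, hyc⟩ := hU.exists_basicOpen_le (V := W) ⟨y, hyW⟩ hy
  obtain ⟨n, a, ha⟩ := exists_res_eq_pow_mul hU c rfl (Y.basicOpen_le c) (res hcW σ)
  have hc : Y.evaluation U y hy c ≠ 0 := (evaluation_ne_zero_iff_mem_basicOpen _ _ hy c).mpr hyc
  refine ⟨a, c ^ n, by rw [map_pow]; exact pow_ne_zero _ hc, ?_⟩
  have := congr_arg (Y.evaluation (Y.basicOpen c) y hyc) ha
  rw [map_mul, map_pow, GenericTrace.evaluation_res, GenericTrace.evaluation_res,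
    GenericTrace.evaluation_res] at this
  rw [this, map_pow]
  rfl

namespace GenericTrace

variable {X Y : Scheme.{u}} {π : X ⟶ Y} (τ : GenericTrace π)

theorem finite [IsNoetherian Y] : Finite τ.T := by
  have hfin : Finite (irreducibleComponents Y) := finite_irreducibleComponents_of_isNoetherian
  have hmem (t : τ.T) : closure {π (τ.pt t)} ∈ irreducibleComponents Y := by
    obtain ⟨z, hz⟩ := QuasiSober.sober
      (_root_.isIrreducible_irreducibleComponent (x := π (τ.pt t))) isClosed_irreducibleComponent
    have : z = π (τ.pt t) := τ.generic t z (by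
      rw [specializes_iff_mem_closure, hz.def]
      exact mem_irreducibleComponent)
    rw [← this, hz.def]
    exact irreducibleComponent_mem_irreducibleComponents _
  refine Finite.of_injective (fun t => (⟨_, hmem t⟩ : irreducibleComponents Y)) fun t t' h => ?_
  have h' : IsGenericPoint (π (τ.pt t)) (closure {π (τ.pt t')}) := Subtype.ext_iff.mp h
  exact τ.injective _ _ (h'.eq rfl)

/-- Every generic point has a basic neighbourhood containing no other generic point. -/
theorem exists_isolating [IsNoetherian Y] {U : Y.affineOpens} {t : τ.T} (ht : π (τ.pt t) ∈ U.1) :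
    ∃ h : Γ(Y, U.1), τ.val U.1 h t ≠ 0 ∧ ∀ t', t' ≠ t → τ.val U.1 h t' = 0 := by
  have := τ.finite
  let O : Y.Opens := ⟨⋂ t' : { t' : τ.T // t' ≠ t }, (closure {π (τ.pt t')})ᶜ,
    isOpen_iInter_of_finite fun _ => isClosed_closure.isOpen_compl⟩
  have hO : π (τ.pt t) ∈ O := by
    refine Set.mem_iInter.mpr fun t' ht' => t'.2 (τ.injective _ _ ?_)
    exact τ.generic t _ (specializes_iff_mem_closure.mpr ht')
  obtain ⟨h, hhO, hth⟩ := U.2.exists_basicOpen_le (V := O) ⟨_, hO⟩ ht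
  refine ⟨h, (val_ne_zero_iff τ ht h).mpr hth, fun t' ht' => ?_⟩
  by_cases htU : π (τ.pt t') ∈ U.1
  · by_contra h0
    have := hhO ((val_ne_zero_iff τ htU h).mp h0)
    exact Set.mem_iInter.mp this ⟨t', ht'⟩ (subset_closure rfl)
  · exact val_of_notMem τ htU h

theorem exists_mem_conductor_val_ne_zero [IsFinite π] [IsNoetherian Y] {U : Y.affineOpens}
    {t : τ.T} (ht : π (τ.pt t) ∈ U.1) :
    ∃ d ∈ τ.conductor.ideal U, τ.val U.1 d t ≠ 0 := by
  classical
  obtain ⟨h, hne, hzero⟩ := τ.exists_isolating ht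
  obtain ⟨G, hG⟩ := exists_finset_eq_sum_pull_mul π U
  choose a c hc hac using fun g : Γ(X, π ⁻¹ᵁ U.1) =>
    exists_evaluation_eq_mul U.2 ht (τ.trace U.1 g t)
  refine ⟨h * ∏ g ∈ G, c g, fun s => ?_, ?_⟩
  · obtain ⟨e, rfl⟩ := hG s
    rw [trace_sum, Finset.mul_sum]
    refine IsRep.sum G fun g hg => ?_
    rw [trace_pull_mul, mul_left_comm]
    refine IsRep.val_mul _ ⟨h * (∏ g' ∈ G.erase g, c g') * a g, trivial, fun t' ht' => ?_⟩
    rw [← Finset.mul_prod_erase G c hg]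
    simp only [GenericTrace.val_mul, Pi.mul_apply, Pi.one_apply]
    by_cases htt : t' = t
    · subst htt
      have : τ.val U.1 (a g) t' = τ.val U.1 (c g) t' * τ.trace U.1 g t' := by
        rw [val_of_mem τ ht, val_of_mem τ ht, hac]
      rw [this]
      ring
    · rw [hzero t' htt]
      simp
  · rw [GenericTrace.val_mul, Pi.mul_apply]
    refine mul_ne_zero hne ?_
    rw [val_of_mem τ ht, map_prod]
    exact Finset.prod_ne_zero_iff.mpr fun g _ => hc g

theorem conductor_mul_ne_bot [IsFinite π] [IsNoetherian Y] [IsReduced Y] {I : Y.IdealSheafData}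
    (hI : I ≠ ⊥) : τ.conductor * I ≠ ⊥ := by
  intro hbot
  refine hI (IdealSheafData.ext (funext fun U => ?_))
  rw [IdealSheafData.ideal_bot, Pi.bot_apply, eq_bot_iff]
  intro x hx
  refine τ.eq_zero_of_val x fun t ht => ?_
  obtain ⟨d, hd, hdt⟩ := τ.exists_mem_conductor_val_ne_zero ht
  have hmem : d * x ∈ (τ.conductor * I).ideal U := by
    rw [IdealSheafData.ideal_mul]
    exact Ideal.mul_mem_mul hd hx
  rw [hbot] at hmem
  have h0 : d * x = 0 := by simpa using hmem
  have := congr_fun (congr_arg (τ.val U.1) h0) t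
  rw [GenericTrace.val_mul, val_zero, Pi.mul_apply] at this
  exact (mul_eq_zero.mp this).resolve_left hdt

theorem conductor_ne_bot [IsFinite π] [IsNoetherian Y] [Nonempty Y] : τ.conductor ≠ ⊥ := by
  intro hbot
  obtain ⟨y⟩ := ‹Nonempty Y›
  obtain ⟨z, -, hz⟩ := exists_generic_specializes y
  obtain ⟨t, -⟩ := τ.exists_of_generic z hz
  obtain ⟨U, ht, -⟩ := exists_mem_affineOpens (π (τ.pt t)) ⊤ trivial
  obtain ⟨d, hd, hdt⟩ := τ.exists_mem_conductor_val_ne_zero ht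
  rw [hbot] at hd
  have h0 : d = 0 := by simpa using hd
  rw [h0, val_zero] at hdt
  exact hdt rfl

end GenericTrace

/-- A clopen subset is the basic open of a global section. -/
theorem exists_basicOpen_eq_of_isClosed {Y : Scheme.{u}} (V : Y.Opens)
    (hV : IsClosed (V : Set Y)) : ∃ s : Γ(Y, ⊤), Y.basicOpen s = V := by
  let V' : Y.Opens := ⟨(V : Set Y)ᶜ, hV.isOpen_compl⟩
  let U (i : Bool) : Y.Opens := if i then V else V'
  have ext {i j : Bool} (h : i ≠ j) (r s : Γ(Y, U i ⊓ U j)) : r = s := by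
    refine section_ext_of_cover (fun i : Empty => i.elim) (fun i => i.elim) ?_ (fun i => i.elim)
    rintro y ⟨h1, h2⟩
    cases i <;> cases j
    exacts [absurd rfl h, absurd h2 h1, absurd h1 h2, absurd rfl h]
  obtain ⟨s, hs⟩ := exists_glue U
    (top_le_iff.mp fun y _ => TopologicalSpace.Opens.mem_iSup.mpr (by
      by_cases hy : y ∈ V
      exacts [⟨true, hy⟩, ⟨false, hy⟩]))
    (fun i => if i then 1 else 0) fun i j => by
      by_cases hij : i = j
      · subst hij
        rfl
      · exact ext hij _ _
  refine ⟨s, le_antisymm (fun y hy => ?_) fun y hy => ?_⟩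
  · by_contra hyV
    have h0 : res le_top s = (0 : Γ(Y, U false)) := hs false
    have : y ∈ Y.basicOpen (res (le_top : U false ≤ ⊤) s) := by
      rw [basicOpen_res']
      exact ⟨hyV, hy⟩
    rw [h0, basicOpen_zero] at this
    exact this
  · have h1 : res le_top s = (1 : Γ(Y, U true)) := hs true
    have : y ∈ Y.basicOpen (res (le_top : U true ≤ ⊤) s) := by
      rw [h1, basicOpen_of_isUnit _ isUnit_one]
      exact hy
    rw [basicOpen_res'] at this
    exact this.2

theorem mem_basicOpen_iff_of_sub_notMem {Y : Scheme.{u}} {U : Y.Opens} {r s : Γ(Y, U)} {y : Y}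
    (hy : y ∈ U) (h : y ∉ Y.basicOpen (r - s)) : y ∈ Y.basicOpen r ↔ y ∈ Y.basicOpen s := by
  rw [← evaluation_eq_zero_iff_notMem_basicOpen _ y hy, map_sub, sub_eq_zero] at h
  rw [← evaluation_ne_zero_iff_mem_basicOpen _ y hy, ← evaluation_ne_zero_iff_mem_basicOpen _ y hy, h]

namespace GenericTrace

variable {X Y : Scheme.{u}} {π : X ⟶ Y} [IsFinite π] (τ : GenericTrace π)

theorem mem_basicOpen_lift_iff {I : Y.IdealSheafData} {β : Γ((τ.conductor * I).subscheme, ⊤)}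
    {f : Γ(Y, ⊤)} (hf : ∀ (W : Y.affineOpens) (b : Γ(Y, W.1)),
      pull (τ.conductor * I).subschemeι W.1 b = res le_top β → res le_top f - b ∈ I.ideal W)
    (z : (τ.conductor * I).subscheme) (hz : (τ.conductor * I).subschemeι z ∈ I.support) :
    (τ.conductor * I).subschemeι z ∈ Y.basicOpen f ↔
      z ∈ (τ.conductor * I).subscheme.basicOpen β := by
  obtain ⟨W, hzW, -⟩ := exists_mem_affineOpens ((τ.conductor * I).subschemeι z) ⊤ trivial
  obtain ⟨b, hb⟩ := pull_subschemeι_surjective (τ.conductor * I) W (res le_top β)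
  rw [IdealSheafData.mem_support_iff_of_mem hzW, mem_zeroLocus_iff] at hz
  have h1 := mem_basicOpen_iff_of_sub_notMem hzW (hz _ (hf W b hb))
  rw [basicOpen_res'] at h1
  have h2 : (τ.conductor * I).subschemeι z ∈ Y.basicOpen b ↔
      z ∈ (τ.conductor * I).subschemeι ⁻¹ᵁ Y.basicOpen b := Iff.rfl
  rw [preimage_basicOpen', hb, basicOpen_res'] at h2
  exact ⟨fun h => (h2.mp (h1.mp ⟨hzW, h⟩)).2, fun h => (h1.mpr (h2.mpr ⟨hzW, h⟩)).2⟩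

theorem exists_isAffineOpen_basicOpen_of_isClosed (τ : GenericTrace π) [IsAffine X] [Surjective π]
    [IsNoetherian Y] [IsReduced Y] (H : ∀ J : Y.IdealSheafData, J ≠ ⊥ → IsAffine J.subscheme) (y : Y)
    (hy : IsClosed {y}) : ∃ s : Γ(Y, ⊤), IsAffineOpen (Y.basicOpen s) ∧ y ∈ Y.basicOpen s := by
  obtain ⟨V, hyV, -⟩ := exists_mem_affineOpens y ⊤ trivial
  let Z : TopologicalSpace.Closeds Y :=
    ⟨(V.1 : Set Y)ᶜ ∪ {y}, V.1.isOpen.isClosed_compl.union hy⟩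
  by_cases hZ : Z = ⊤
  · obtain ⟨s, hs⟩ := exists_basicOpen_eq_of_isClosed V.1 (by
      convert hy
      refine Set.Subset.antisymm (fun p hp => ?_) (by simpa using hyV)
      have : p ∈ Z := hZ ▸ trivial
      exact this.resolve_left fun h => h hp)
    exact ⟨s, hs ▸ V.2, hs ▸ hyV⟩
  · let I := IdealSheafData.vanishingIdeal Z
    have hZI : Z ≤ I.support := IdealSheafData.le_support_iff_le_vanishingIdeal.mpr le_rfl
    have hI : I ≠ ⊥ := fun h => hZ (by
      have := IdealSheafData.coe_support_vanishingIdeal Z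
      change (I.support : Set Y) = Z at this
      rw [h, IdealSheafData.support_bot] at this
      exact SetLike.coe_injective this.symm)
    have hmem {p : Y} (hp : p ∈ Z) : ∃ z, (τ.conductor * I).subschemeι z = p := by
      change p ∈ Set.range (τ.conductor * I).subschemeι
      rw [IdealSheafData.range_subschemeι, IdealSheafData.support_mul]
      exact Or.inr (hZI hp)
    have := H _ (τ.conductor_mul_ne_bot hI)
    have hyZ : y ∈ Z := Or.inr rfl
    obtain ⟨z, hzy⟩ := hmem hyZ
    rw [← hzy] at hyV hyZ ⊢
    obtain ⟨β, hβV, hzβ⟩ := (isAffineOpen_top (τ.conductor * I).subscheme).exists_basicOpen_le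
      (V := (τ.conductor * I).subschemeι ⁻¹ᵁ V.1) ⟨z, hyV⟩ trivial
    obtain ⟨f, hf⟩ := τ.exists_lift β
    have hle : Y.basicOpen f ≤ V.1 := by
      intro p hp
      by_contra hpV
      obtain ⟨z', rfl⟩ := hmem (Or.inl hpV : p ∈ Z)
      exact hpV (hβV ((τ.mem_basicOpen_lift_iff hf z' (hZI (Or.inl hpV))).mp hp))
    exact ⟨f, isAffineOpen_basicOpen_of_le V.2 f hle,
      (τ.mem_basicOpen_lift_iff hf z (hZI hyZ)).mpr hzβ⟩

theorem exists_isAffineOpen_basicOpen (τ : GenericTrace π) [IsAffine X] [Surjective π]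
    [IsNoetherian Y] [IsReduced Y] (H : ∀ J : Y.IdealSheafData, J ≠ ⊥ → IsAffine J.subscheme) (y : Y) :
    ∃ s : Γ(Y, ⊤), IsAffineOpen (Y.basicOpen s) ∧ y ∈ Y.basicOpen s := by
  obtain ⟨x, hx, hcl⟩ := (isClosed_closure (s := {y})).exists_closed_singleton
    (Set.singleton_nonempty y).closure
  obtain ⟨s, hs, hxs⟩ := τ.exists_isAffineOpen_basicOpen_of_isClosed H x hcl
  exact ⟨s, hs, (specializes_iff_mem_closure.mpr hx).mem_open (Y.basicOpen s).isOpen hxs⟩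

/-- If the pullbacks of `S` to an affine scheme have no common zero, they give a partition of
unity there. -/
theorem exists_sum_mul_gpull_eq_one {Z : Scheme.{u}} [IsAffine Z] (φ : Z ⟶ Y) (S : Set Γ(Y, ⊤))
    (hS : ∀ y, ∃ s ∈ S, y ∈ Y.basicOpen s) :
    ∃ (n : ℕ) (c : Fin n → Γ(Z, ⊤)) (s : Fin n → S), ∑ i, c i * gpull φ (s i).1 = 1 := by
  have h : Ideal.span (gpull φ '' S) = ⊤ := span_eq_top_of_forall_mem_basicOpen _ fun z => by
    obtain ⟨s, hs, hzs⟩ := hS (φ z)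
    refine ⟨gpull φ s, ⟨s, hs, rfl⟩, ?_⟩
    rw [← preimage_basicOpen_gpull]
    exact hzs
  obtain ⟨n, c, g, hg⟩ := Submodule.mem_span_set'.mp ((Ideal.eq_top_iff_one _).mp h)
  choose s hs hsg using fun i => (g i).2
  refine ⟨n, c, fun i => ⟨s i, hs i⟩, ?_⟩
  rw [← hg]
  exact Finset.sum_congr rfl fun i _ => by rw [hsg, smul_eq_mul]

/-- A function in the conductor lies in every ideal whose members have no common zero. -/
theorem mem_span_of_res_mem_conductor [IsAffine X] [IsReduced Y] (S : Set Γ(Y, ⊤))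
    (hS : ∀ y, ∃ s ∈ S, y ∈ Y.basicOpen s) (m : Γ(Y, ⊤))
    (hm : ∀ W : Y.affineOpens, res le_top m ∈ τ.conductor.ideal W) : m ∈ Ideal.span S := by
  obtain ⟨n, a, s, has⟩ := exists_sum_mul_gpull_eq_one π S hS
  have hglue (i : Fin n) : ∃ r : Γ(Y, ⊤), τ.val ⊤ r = τ.val ⊤ m * τ.gtrace (a i) := by
    have hrep (W : Y.affineOpens) : ∃ r : Γ(Y, W.1), ∀ t, π (τ.pt t) ∈ W.1 →
        τ.val W.1 r t = (τ.val ⊤ m * τ.gtrace (a i)) t := by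
      obtain ⟨r, -, hr⟩ := τ.isRep_of_mem_conductor (hm W) (res le_top (a i))
      refine ⟨r, fun t ht => ?_⟩
      rw [hr t ht, Pi.mul_apply, Pi.mul_apply, val_res τ le_top m ht, trace_res_top τ _ ht]
    choose r hr using hrep
    obtain ⟨g, hg⟩ := τ.exists_glue_of_val (fun W : Y.affineOpens => W.1)
      (iSup_affineOpens_eq_top Y) _ r hr
    refine ⟨g, funext fun t => ?_⟩
    obtain ⟨W, ht, -⟩ := exists_mem_affineOpens (π (τ.pt t)) ⊤ trivial
    rw [← val_res τ (le_top : W.1 ≤ ⊤) g ht, hg, hr W t ht]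
  choose r hr using hglue
  have : m = ∑ i, r i * (s i).1 := by
    refine τ.eq_of_val _ _ fun t _ => congr_fun ?_ t
    rw [val_sum]
    simp only [val_mul, hr]
    have h1 := τ.gtrace_one
    rw [← has, gtrace_sum] at h1
    refine (mul_one _).symm.trans ?_
    rw [← h1, Finset.mul_sum]
    refine Finset.sum_congr rfl fun i _ => ?_
    rw [mul_comm (a i), gtrace_gpull_mul]
    ring
  rw [this]
  exact sum_mem fun i _ => Ideal.mul_mem_left _ _ (Ideal.subset_span (s i).2)

theorem span_eq_top [IsAffine X] [Surjective π] [IsReduced Y]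
    [IsAffine (τ.conductor * τ.conductor).subscheme] (S : Set Γ(Y, ⊤))
    (hS : ∀ y, ∃ s ∈ S, y ∈ Y.basicOpen s) : Ideal.span S = ⊤ := by
  obtain ⟨n, γ, s, hγ⟩ := exists_sum_mul_gpull_eq_one (τ.conductor * τ.conductor).subschemeι S hS
  choose f hf using fun i => τ.exists_lift (γ i)
  have hm : 1 - ∑ i, f i * (s i).1 ∈ Ideal.span S := by
    refine τ.mem_span_of_res_mem_conductor S hS _ fun W => ?_
    choose c hc using fun i =>
      pull_subschemeι_surjective (τ.conductor * τ.conductor) W (res le_top (γ i))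
    have h1 : 1 - ∑ i, c i * res le_top (s i).1 ∈ τ.conductor.ideal W := by
      refine ideal_mul_le_right τ.conductor _ _ ?_
      rw [← pull_subschemeι_eq_zero_iff, map_sub, map_one, map_sum, sub_eq_zero]
      simp only [map_mul, hc, ← res_gpull]
      rw [← map_one (res le_top), ← hγ, map_sum]
      simp only [map_mul]
    have h2 : ∑ i, (res le_top (f i) - c i) * res le_top (s i).1 ∈ τ.conductor.ideal W :=
      sum_mem fun i _ => Ideal.mul_mem_right _ _ (hf i W (c i) (hc i))
    have key : res le_top (1 - ∑ i, f i * (s i).1) = (1 - ∑ i, c i * res le_top (s i).1) -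
        ∑ i, (res le_top (f i) - c i) * res (le_top : W.1 ≤ ⊤) (s i).1 := by
      simp only [map_sub, map_one, map_sum, map_mul, sub_mul, Finset.sum_sub_distrib]
      ring
    rw [key]
    exact sub_mem h1 h2
  rw [Ideal.eq_top_iff_one]
  have hsum : ∑ i, f i * (s i).1 ∈ Ideal.span S :=
    sum_mem fun i _ => Ideal.mul_mem_left _ _ (Ideal.subset_span (s i).2)
  simpa using add_mem hm hsum

end GenericTrace

/-- The reduced case of the inductive step of Chevalley's theorem. -/
theorem isAffine_of_isReduced_of_forall_subscheme {X Y : Scheme.{u}} (π : X ⟶ Y) [IsAffine X]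
    [IsFinite π] [Surjective π] [IsNoetherian Y] [IsReduced Y]
    (H : ∀ J : Y.IdealSheafData, J ≠ ⊥ → IsAffine J.subscheme) : IsAffine Y := by
  cases isEmpty_or_nonempty Y
  · infer_instance
  obtain ⟨τ⟩ := nonempty_genericTrace π
  have := H _ (τ.conductor_mul_ne_bot τ.conductor_ne_bot)
  exact isAffine_of_isAffineOpen_basicOpen { s | IsAffineOpen (Y.basicOpen s) }
    (τ.span_eq_top _ fun y => τ.exists_isAffineOpen_basicOpen H y) fun _ hs => hs

/-- The inductive step of Chevalley's theorem. -/
theorem isAffine_of_forall_subscheme {X Y : Scheme.{u}} (π : X ⟶ Y) [IsAffine X] [IsFinite π]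
    [Surjective π] [IsNoetherian Y]
    (H : ∀ J : Y.IdealSheafData, J ≠ ⊥ → IsAffine J.subscheme) : IsAffine Y := by
  by_cases hY : IsReduced Y
  · exact isAffine_of_isReduced_of_forall_subscheme π H
  · obtain ⟨I, hI, hI2⟩ := exists_mul_self_eq_bot hY
    have := H I hI
    exact isAffine_of_mul_self_eq_bot I hI2

/-- Ideal sheaves on a noetherian scheme satisfy the ascending chain condition. -/
theorem wellFoundedGT_idealSheafData (Y : Scheme.{u}) [IsNoetherian Y] :
    WellFoundedGT Y.IdealSheafData := by
  obtain ⟨s, hs⟩ := exists_finite_affineOpens_cover Y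
  have (U : s) : WellFoundedLT (Ideal Γ(Y, U.1))ᵒᵈ := by
    have : IsNoetherianRing Γ(Y, U.1) := IsLocallyNoetherian.component_noetherian U.1
    have : WellFoundedGT (Ideal Γ(Y, U.1)) := inferInstanceAs (WellFoundedGT (Submodule _ _))
    infer_instance
  let F (I : Y.IdealSheafData) (U : s) : (Ideal Γ(Y, U.1))ᵒᵈ := OrderDual.toDual (I.ideal U.1)
  have hanti : Antitone F := fun I J h U => h U.1
  have hinj : Function.Injective F := fun I J h =>
    Scheme.IdealSheafData.ext_of_iSup_eq_top (fun U : s => U.1) hs (fun U => congr_fun h U)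
  exact (hanti.strictAnti_of_injective hinj).wellFoundedGT

/-- Chevalley's theorem: a noetherian scheme admitting a finite surjection from an affine scheme
is affine. -/
theorem isAffine_of_isFinite_of_surjective {X Y : Scheme.{u}} (π : X ⟶ Y) [IsAffine X] [IsFinite π]
    [Surjective π] [IsNoetherian Y] : IsAffine Y := by
  have key : ∀ (I : Y.IdealSheafData) (Z : Scheme.{u}) (i : Z ⟶ Y) [IsClosedImmersion i],
      i.ker = I → id (IsAffine Z) := by
    have := wellFoundedGT_idealSheafData Y
    intro I
    induction I using WellFoundedGT.induction with
    | ind I ih =>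
    intro Z i _ hI
    have : IsLocallyNoetherian Z := LocallyOfFiniteType.isLocallyNoetherian i
    have : CompactSpace Z := QuasiCompact.compactSpace_of_compactSpace i
    have : IsNoetherian Z := {}
    have : IsAffine (Limits.pullback π i) := isAffine_of_isAffineHom (Limits.pullback.fst π i)
    change IsAffine Z
    refine isAffine_of_forall_subscheme (Limits.pullback.snd π i) fun J hJ => ?_
    refine ih _ (lt_of_le_of_ne (hI ▸ Scheme.Hom.le_ker_comp J.subschemeι i) fun h => hJ ?_) _
      (J.subschemeι ≫ i) rfl
    let l := IsClosedImmersion.lift (J.subschemeι ≫ i) i (by rw [← h, hI])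
    have hl : l ≫ J.subschemeι = 𝟙 _ := by
      rw [← cancel_mono i, Category.assoc, IsClosedImmersion.lift_fac, Category.id_comp]
    have : IsSplitEpi J.subschemeι := ⟨⟨l, hl⟩⟩
    rw [← Scheme.isIso_subschemeι_iff_eq_bot]
    exact isIso_of_mono_of_isSplitEpi _
  exact key _ Y (𝟙 Y) rfl

end AlgebraicGeometry.Scheme

end Chevalley

/-- Let `U = D₊(f)` be the complement of the hypersurface `V₊(f)` in the weighted projective
space `Proj k[X_0, …, X_n]` (where `X_i` has weight `d i ≥ 1` and `f` is weighted homogeneous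
of positive weighted degree `m`).  If a noetherian scheme `Y` admits a finite surjective
morphism `U ⟶ Y`, then `Y` is affine. -/
theorem isAffine_of_finite_surjective_from_weightedProj_basicOpen
    (k : Type*) [Field k] (n : ℕ) (d : Fin (n + 1) → ℕ) (hd : ∀ i, 1 ≤ d i)
    (f : MvPolynomial (Fin (n + 1)) k) (m : ℕ) (hm : 0 < m)
    (hf : f ∈ weightedHomogeneousSubmodule k d m)
    (Y : Scheme)
    (g : Scheme.Opens.toScheme
      (X := Proj (weightedHomogeneousSubmodule k d))
      (ProjectiveSpectrum.basicOpen (weightedHomogeneousSubmodule k d) f) ⟶ Y)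
    [IsFinite g] (hg : Function.Surjective g.base) [IsNoetherian Y] :
    IsAffine Y := by
  have : IsAffine (Scheme.Opens.toScheme (X := Proj (weightedHomogeneousSubmodule k d))
      (ProjectiveSpectrum.basicOpen (weightedHomogeneousSubmodule k d) f)) :=
    Proj.isAffineOpen_basicOpen (weightedHomogeneousSubmodule k d) f hf hm
  have : Surjective g := ⟨hg⟩
  exact Scheme.isAffine_of_isFinite_of_surjective g
end
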